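/- arXiv:0803.0667 — 2 statements merged into one kernel-verified Lean document; each statement's English description precedes it below -/
import Mathlib

section
/- Let d ≥ 1 and let V, φ₀ satisfy Assumption (A). Then there exist T > 0 and φ ∈ C^∞([0,T]×ℝ^d; ℝ) such that (i) ∂_t φ(t,x) + (1/2)|∇_x φ(t,x)|² + V(t,x) = 0 for all (t,x) ∈ [0,T]×ℝ^d; (ii) φ(0,·) = φ₀; (iii) for every multi-index α with |α| ≥ 2, ∂_x^α φ is bounded on [0,T]×ℝ^d. Moreover φ is unique in the subquadratic class: any φ̃ ∈ C^∞([0,T]×ℝ^d; ℝ) satisfying (i) and (ii) and whose second-order spatial derivatives are bounded on [0,T]×ℝ^d coincides with φ. -/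
/-!
The solution is constructed by the method of characteristics, in an integrated form that avoids
inverting the flow. A bicharacteristic reaching `x` at time `t`, rescaled to `[0,1]`, is a curve
`u ∈ C([0,1], ℝ^d)` with momentum

  `p(s) = ∇φ₀(u(0)) - t ∫₀ˢ ∇V(t r, u(r)) dr`,   `u(s) = x - t ∫ₛ¹ p(r) dr`.

The momentum is a globally Lipschitz function of `u`, because the second derivatives of `V` and `φ₀`
are bounded, so for small `t` the second equation is a fixed-point problem for a contraction with
constant `1/2`. Superposition operators are smooth on `C([0,1], ℝ^d)` (`contDiff_nem`), and the
implicit function theorem makes the fixed point smooth in `(t, x)` (`exists_contDiff_fixedPoint`).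
Truncating the time variable smoothly keeps the contraction global, so that all functions involved
are smooth on the whole of `ℝ × ℝ^d` although the equations hold for small times only.

Bounds: the derivative of the fixed point in `x` solves an affine equation `w = F₀ + P w` with
`‖P‖ ≤ 1/2`. The class of such equations is stable under differentiation, so `w` inherits the
derivative bounds of `F₀` and `P` (`unifBdd_of_affine_fixedPoint`). As `u` itself is unbounded, the
chain rule must only use its derivatives of order `≥ 1` (`UnifBdd.comp`).

The phase is `φ₀(u(0))` plus the action along `u` (`phase`). The first variation formula, that is
integration by parts (`intL_inn_primL`) together with the energy identity (`IsChar.energy`), gives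
`dφ = p(1) dx - (|p(1)|²/2 + V) dt` (`fderiv_phase_of_isChar`). This is the eikonal equation, and it
shows `∇φ = p(1)`, whose derivatives in `x` have been bounded.

Uniqueness: if `ψ` is a solution with bounded Hessian, the defect `∇ψ - p` along a characteristic
solves a linear differential equation with bounded coefficients and vanishes initially, so it
vanishes identically by Gronwall. Then `ψ` is the initial phase plus the action along the
characteristic (`IsChar.eq_action`), and so coincides with `φ`.
-/

open MeasureTheory Filter Complex Set
open scoped ENNReal

noncomputable section

/-- `ℝ^d` as a Euclidean space. -/
abbrev Ed (d : ℕ) := EuclideanSpace ℝ (Fin d)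

namespace Eikonal

set_option linter.unusedSectionVars false

/-! ### Uniform bounds on derivatives, and affine fixed-point equations -/

section Bounds

variable {ι : Type*} {E F G H : Type}
  [NormedAddCommGroup E] [NormedSpace ℝ E] [NormedAddCommGroup F] [NormedSpace ℝ F]
  [NormedAddCommGroup G] [NormedSpace ℝ G] [NormedAddCommGroup H] [NormedSpace ℝ H]

/-- The derivatives of order `≤ n` of the maps `f i` are bounded, uniformly in the point and in the
index `i`. -/
def UnifBdd (n : ℕ) (f : ι → E → F) : Prop :=
  ∀ k ≤ n, ∃ C : ℝ, ∀ i x, ‖iteratedFDeriv ℝ k (f i) x‖ ≤ C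

theorem UnifBdd.mono {m n : ℕ} {f : ι → E → F} (h : UnifBdd n f) (hm : m ≤ n) : UnifBdd m f :=
  fun k hk => h k (hk.trans hm)

theorem unifBdd_zero {f : ι → E → F} {C : ℝ} (h : ∀ i x, ‖f i x‖ ≤ C) : UnifBdd 0 f := by
  intro k hk
  obtain rfl : k = 0 := by omega
  exact ⟨C, fun i x => by simpa using h i x⟩

theorem UnifBdd.bound {n : ℕ} {f : ι → E → F} (h : UnifBdd n f) :
    ∃ C : ℝ, 0 ≤ C ∧ ∀ i x, ‖f i x‖ ≤ C := by
  obtain ⟨C, hC⟩ := h 0 (Nat.zero_le n)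
  exact ⟨max C 0, le_max_right _ _, fun i x => by simpa using (hC i x).trans (le_max_left C 0)⟩

theorem unifBdd_succ {n : ℕ} {f : ι → E → F} (h0 : UnifBdd 0 f)
    (h1 : UnifBdd n (fun i => fderiv ℝ (f i))) : UnifBdd (n + 1) f := by
  intro k hk
  cases k with
  | zero => exact h0 0 le_rfl
  | succ k =>
    obtain ⟨C, hC⟩ := h1 k (by omega)
    exact ⟨C, fun i x => by rw [← norm_iteratedFDeriv_fderiv]; exact hC i x⟩

theorem UnifBdd.fderiv {n : ℕ} {f : ι → E → F} (h : UnifBdd (n + 1) f) :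
    UnifBdd n (fun i => fderiv ℝ (f i)) := by
  intro k hk
  obtain ⟨C, hC⟩ := h (k + 1) (by omega)
  exact ⟨C, fun i x => by rw [norm_iteratedFDeriv_fderiv]; exact hC i x⟩

theorem UnifBdd.clm {n : ℕ} {f : ι → E → F} (L : F →L[ℝ] G) (hf : ∀ i, ContDiff ℝ (⊤ : ℕ∞) (f i))
    (h : UnifBdd n f) : UnifBdd n (fun i x => L (f i x)) := by
  intro k hk
  obtain ⟨C, hC⟩ := h k hk
  refine ⟨‖L‖ * C, fun i x => ?_⟩
  refine (L.norm_iteratedFDeriv_comp_left (hf i).contDiffAt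
    (by exact_mod_cast le_top : (k : WithTop ℕ∞) ≤ (⊤ : ℕ∞))).trans ?_
  exact mul_le_mul_of_nonneg_left (hC i x) (norm_nonneg _)

theorem UnifBdd.bilin {n : ℕ} {f : ι → E → F} {g : ι → E → G} (B : F →L[ℝ] G →L[ℝ] H)
    (hf : ∀ i, ContDiff ℝ (⊤ : ℕ∞) (f i)) (hg : ∀ i, ContDiff ℝ (⊤ : ℕ∞) (g i))
    (h : UnifBdd n f) (h' : UnifBdd n g) : UnifBdd n (fun i x => B (f i x) (g i x)) := by
  intro k hk
  have h2 : ∀ j, ∃ C : ℝ, j ≤ n → ∀ i x, ‖iteratedFDeriv ℝ j (f i) x‖ ≤ C := fun j => by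
    by_cases hj : j ≤ n
    · obtain ⟨C, hC⟩ := h j hj; exact ⟨C, fun _ => hC⟩
    · exact ⟨0, fun h => absurd h hj⟩
  have h3 : ∀ j, ∃ C : ℝ, j ≤ n → ∀ i x, ‖iteratedFDeriv ℝ j (g i) x‖ ≤ C := fun j => by
    by_cases hj : j ≤ n
    · obtain ⟨C, hC⟩ := h' j hj; exact ⟨C, fun _ => hC⟩
    · exact ⟨0, fun h => absurd h hj⟩
  choose C hC using h2
  choose D hD using h3
  refine ⟨‖B‖ * ∑ j ∈ Finset.range (k + 1), (k.choose j : ℝ) * C j * D (k - j), fun i x => ?_⟩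
  refine (B.norm_iteratedFDeriv_le_of_bilinear (hf i) (hg i) x
    (by exact_mod_cast le_top : (k : WithTop ℕ∞) ≤ (⊤ : ℕ∞))).trans ?_
  refine mul_le_mul_of_nonneg_left (Finset.sum_le_sum fun j hj => ?_) B.opNorm_nonneg
  have hj' : j ≤ k := by simpa [Nat.lt_succ_iff] using hj
  have e1 := hC j (by omega) i x
  have e2 := hD (k - j) (by omega) i x
  have : 0 ≤ C j := (norm_nonneg _).trans e1
  gcongr

theorem UnifBdd.add {n : ℕ} {f g : ι → E → F}
    (hf : ∀ i, ContDiff ℝ (⊤ : ℕ∞) (f i)) (hg : ∀ i, ContDiff ℝ (⊤ : ℕ∞) (g i))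
    (h : UnifBdd n f) (h' : UnifBdd n g) : UnifBdd n (fun i x => f i x + g i x) := by
  intro k hk
  obtain ⟨C, hC⟩ := h k hk
  obtain ⟨D, hD⟩ := h' k hk
  refine ⟨C + D, fun i x => ?_⟩
  have hk' : (k : WithTop ℕ∞) ≤ (⊤ : ℕ∞) := by exact_mod_cast le_top
  have := iteratedFDeriv_add_apply (x := x) ((hf i).of_le hk').contDiffAt
    ((hg i).of_le hk').contDiffAt
  change ‖iteratedFDeriv ℝ k (f i + g i) x‖ ≤ _
  rw [this]
  exact (norm_add_le _ _).trans (add_le_add (hC i x) (hD i x))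

theorem unifBdd_const (n : ℕ) (c : F) : UnifBdd n (fun (_ : ι) (_ : E) => c) := by
  intro k _
  rcases Nat.eq_zero_or_pos k with rfl | hk
  · exact ⟨‖c‖, fun i x => by simp⟩
  · exact ⟨0, fun i x => by simp [iteratedFDeriv_const_of_ne hk.ne']⟩

/-- Scalar multiplication by a bounded function of the index. -/
theorem UnifBdd.smul {n : ℕ} {f : ι → E → F} {a : ι → ℝ} {A : ℝ} (ha : ∀ i, |a i| ≤ A)
    (hf : ∀ i, ContDiff ℝ (⊤ : ℕ∞) (f i)) (h : UnifBdd n f) :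
    UnifBdd n (fun i x => a i • f i x) := by
  refine UnifBdd.bilin (ContinuousLinearMap.lsmul ℝ ℝ) (fun i => contDiff_const) hf ?_ h
  intro k _
  rcases Nat.eq_zero_or_pos k with rfl | hk
  · exact ⟨A, fun i x => by simpa using ha i⟩
  · exact ⟨0, fun i x => by simp [iteratedFDeriv_const_of_ne hk.ne']⟩

/-- Only the derivatives of `f i` of orders `1, …, n` enter the derivatives of `g i ∘ f i`
of order `≤ n`, so the `f i` themselves may be unbounded. -/
theorem UnifBdd.comp {n : ℕ} {g : ι → F → G} {f : ι → E → F}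
    (hg : ∀ i, ContDiff ℝ (⊤ : ℕ∞) (g i)) (hf : ∀ i, ContDiff ℝ (⊤ : ℕ∞) (f i))
    (h : UnifBdd n g)
    (h' : ∀ k, 1 ≤ k → k ≤ n → ∃ C : ℝ, ∀ i x, ‖iteratedFDeriv ℝ k (f i) x‖ ≤ C) :
    UnifBdd n (fun i x => g i (f i x)) := by
  intro k hk
  have h2 : ∀ j, ∃ C : ℝ, j ≤ n → ∀ i x, ‖iteratedFDeriv ℝ j (g i) x‖ ≤ C := fun j => by
    by_cases hj : j ≤ n
    · obtain ⟨C, hC⟩ := h j hj; exact ⟨C, fun _ => hC⟩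
    · exact ⟨0, fun h => absurd h hj⟩
  have h3 : ∀ j, ∃ C : ℝ, 1 ≤ j → j ≤ n → ∀ i x, ‖iteratedFDeriv ℝ j (f i) x‖ ≤ C := fun j => by
    by_cases hj : 1 ≤ j ∧ j ≤ n
    · obtain ⟨C, hC⟩ := h' j hj.1 hj.2; exact ⟨C, fun _ _ => hC⟩
    · exact ⟨0, fun h h' => absurd ⟨h, h'⟩ hj⟩
  choose C hC using h2
  choose D hD using h3
  set C' := ∑ j ∈ Finset.range (k + 1), |C j|
  set D' := 1 + ∑ j ∈ Finset.range (k + 1), |D j|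
  have hD1 : 1 ≤ D' := le_add_of_nonneg_right (Finset.sum_nonneg fun _ _ => abs_nonneg _)
  refine ⟨k.factorial * C' * D' ^ k, fun i x => ?_⟩
  refine norm_iteratedFDeriv_comp_le (hg i) (hf i)
    (by exact_mod_cast le_top : (k : WithTop ℕ∞) ≤ (⊤ : ℕ∞)) x (fun j hj => ?_) (fun j hj hj' => ?_)
  · refine (hC j (by omega) i (f i x)).trans ((le_abs_self _).trans ?_)
    exact Finset.single_le_sum (f := fun j => |C j|) (fun _ _ => abs_nonneg _)
      (Finset.mem_range.2 (by omega))
  · refine (hD j hj (by omega) i x).trans ((le_abs_self _).trans ?_)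
    have : |D j| ≤ D' := by
      refine (Finset.single_le_sum (f := fun j => |D j|) (fun _ _ => abs_nonneg _)
        (Finset.mem_range.2 (by omega : j < k + 1))).trans ?_
      simp [D']
    exact this.trans (le_self_pow₀ hD1 (by omega))

theorem contDiff_clm (L : F →L[ℝ] G) {f : E → F} (hf : ContDiff ℝ (⊤ : ℕ∞) f) :
    ContDiff ℝ (⊤ : ℕ∞) (fun x => L (f x)) := L.contDiff.comp hf

theorem contDiff_fderiv {f : E → F} (hf : ContDiff ℝ (⊤ : ℕ∞) f) :
    ContDiff ℝ (⊤ : ℕ∞) (fderiv ℝ f) := hf.fderiv_right (by simp)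

/-- Differentiating `W = F₀ + P W` gives an equation of the same type for `DW`. -/
theorem fderiv_affine_fixedPoint {W F₀ : E → F} {P : E → (F →L[ℝ] F)}
    (hW : ContDiff ℝ (⊤ : ℕ∞) W) (hF : ContDiff ℝ (⊤ : ℕ∞) F₀) (hP : ContDiff ℝ (⊤ : ℕ∞) P)
    (h : ∀ x, W x = F₀ x + P x (W x)) (x : E) :
    fderiv ℝ W x = (fderiv ℝ F₀ x + (fderiv ℝ P x).flip (W x)) +
      ContinuousLinearMap.compL ℝ E F F (P x) (fderiv ℝ W x) := by
  have e : W = fun x => F₀ x + P x (W x) := funext h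
  have d1 := (hF.differentiable (by simp) x).hasFDerivAt
  have d2 := (hP.differentiable (by simp) x).hasFDerivAt
  have d3 := (hW.differentiable (by simp) x).hasFDerivAt
  have d4 := d1.add (d2.clm_apply d3)
  have d5 : fderiv ℝ W x = fderiv ℝ F₀ x + ((P x).comp (fderiv ℝ W x) +
      (fderiv ℝ P x).flip (W x)) := by
    have := d4.fderiv
    rw [← this]; congr 1
  conv_lhs => rw [d5]
  ext v
  simp
  abel

/-- The operator `T ↦ T.flip` as a bounded bilinear map. -/
def flipBilin (E F G : Type) [NormedAddCommGroup E] [NormedSpace ℝ E] [NormedAddCommGroup F]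
    [NormedSpace ℝ F] [NormedAddCommGroup G] [NormedSpace ℝ G] :
    (E →L[ℝ] F →L[ℝ] G) →L[ℝ] F →L[ℝ] (E →L[ℝ] G) :=
  (ContinuousLinearMap.flipₗᵢ ℝ E F G).toContinuousLinearEquiv.toContinuousLinearMap

theorem contDiff_flipBilin {f : H → (E →L[ℝ] F →L[ℝ] G)} {g : H → F}
    (hf : ContDiff ℝ (⊤ : ℕ∞) f) (hg : ContDiff ℝ (⊤ : ℕ∞) g) :
    ContDiff ℝ (⊤ : ℕ∞) (fun x => flipBilin E F G (f x) (g x)) :=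
  (contDiff_clm (flipBilin E F G) hf).clm_apply hg

theorem UnifBdd.flip {n : ℕ} {f : ι → H → (E →L[ℝ] F →L[ℝ] G)} {g : ι → H → F}
    (hf : ∀ i, ContDiff ℝ (⊤ : ℕ∞) (f i)) (hg : ∀ i, ContDiff ℝ (⊤ : ℕ∞) (g i))
    (h : UnifBdd n f) (h' : UnifBdd n g) :
    UnifBdd n (fun i x => flipBilin E F G (f i x) (g i x)) := by
  have := @UnifBdd.bilin ι H (E →L[ℝ] F →L[ℝ] G) F (E →L[ℝ] G) _ _ _ _ _ _ _ _ n f g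
    (flipBilin E F G)
  exact this hf hg h h'

theorem UnifBdd.compL {n : ℕ} {P : ι → H → (F →L[ℝ] F)}
    (hP : ∀ i, ContDiff ℝ (⊤ : ℕ∞) (P i)) (h : UnifBdd n P) :
    UnifBdd n (fun i x => ContinuousLinearMap.compL ℝ E F F (P i x)) :=
  h.clm _ hP

theorem norm_compL_apply_le (A : F →L[ℝ] F) : ‖ContinuousLinearMap.compL ℝ E F F A‖ ≤ ‖A‖ :=
  ContinuousLinearMap.opNorm_le_bound _ (norm_nonneg _) fun L => A.opNorm_comp_le L

/-- If `W = F₀ + P W` pointwise with `‖P‖ ≤ 1/2`, then `W` inherits the derivative bounds of `P` and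
`F₀`: the derivative of `W` solves an equation of the same type, with `P` acting by
postcomposition and source `DF₀ + (DP) W`. -/
theorem unifBdd_of_affine_fixedPoint (n : ℕ) : ∀ {Y : Type} [NormedAddCommGroup Y]
    [NormedSpace ℝ Y] {W F₀ : ι → E → Y} {P : ι → E → (Y →L[ℝ] Y)},
    (∀ i, ContDiff ℝ (⊤ : ℕ∞) (W i)) → (∀ i, ContDiff ℝ (⊤ : ℕ∞) (F₀ i)) →
    (∀ i, ContDiff ℝ (⊤ : ℕ∞) (P i)) → (∀ i x, ‖P i x‖ ≤ 1 / 2) →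
    (∀ i x, W i x = F₀ i x + P i x (W i x)) → UnifBdd n F₀ → UnifBdd n P → UnifBdd n W := by
  have key : ∀ {Y : Type} [NormedAddCommGroup Y]
      [NormedSpace ℝ Y] {W F₀ : ι → E → Y} {P : ι → E → (Y →L[ℝ] Y)},
      (∀ i x, ‖P i x‖ ≤ 1 / 2) →
      (∀ i x, W i x = F₀ i x + P i x (W i x)) → UnifBdd 0 F₀ → UnifBdd 0 W := by
    intro Y _ _ W F₀ P hP h hF
    obtain ⟨C, -, hC⟩ := hF.bound
    refine unifBdd_zero (C := 2 * C) fun i x => ?_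
    have h1 : ‖W i x‖ ≤ ‖F₀ i x‖ + ‖P i x (W i x)‖ := by
      conv_lhs => rw [h i x]
      exact norm_add_le _ _
    have h2 : ‖P i x (W i x)‖ ≤ 1 / 2 * ‖W i x‖ := (P i x).le_of_opNorm_le (hP i x) _
    linarith [hC i x]
  induction n with
  | zero => intro Y _ _ W F₀ P _ _ _ hP h hF _; exact key hP h hF
  | succ n ih =>
    intro Y _ _ W F₀ P hW hF hPs hP h bF bP
    have hWn : UnifBdd n W := ih hW hF hPs hP h (bF.mono n.le_succ) (bP.mono n.le_succ)
    refine unifBdd_succ (key hP h (bF.mono (Nat.zero_le _))) ?_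
    have hB : ∀ i, ContDiff ℝ (⊤ : ℕ∞)
        (fun x => flipBilin E Y Y (fderiv ℝ (P i) x) (W i x)) := fun i =>
      contDiff_flipBilin (contDiff_fderiv (hPs i)) (hW i)
    have b1 : UnifBdd n (fun i x => flipBilin E Y Y (fderiv ℝ (P i) x) (W i x)) :=
      UnifBdd.flip (fun i => contDiff_fderiv (hPs i)) hW bP.fderiv hWn
    have b2 : UnifBdd n (fun i x => fderiv ℝ (F₀ i) x + flipBilin E Y Y (fderiv ℝ (P i) x) (W i x)) :=
      UnifBdd.add (f := fun i => fderiv ℝ (F₀ i)) (fun i => contDiff_fderiv (hF i)) hB bF.fderiv b1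
    have b3 := UnifBdd.compL (E := E) hPs (bP.mono n.le_succ)
    exact ih (fun i => contDiff_fderiv (hW i)) (fun i => (contDiff_fderiv (hF i)).add (hB i))
      (fun i => contDiff_clm _ (hPs i)) (fun i x => (norm_compL_apply_le _).trans (hP i x))
      (fun i x => fderiv_affine_fixedPoint (hW i) (hF i) (hPs i) (h i) x) b2 b3

/-- Derivative bounds for a family of fixed points `u = c + G(u)` of contractions. -/
theorem unifBdd_fderiv_fixedPoint {X : Type} [NormedAddCommGroup X] [NormedSpace ℝ X]
    {G : ι → X → X} {u : ι → E → X} (c : E →L[ℝ] X)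
    (hG : ∀ i, ContDiff ℝ (⊤ : ℕ∞) (G i)) (hu : ∀ i, ContDiff ℝ (⊤ : ℕ∞) (u i))
    (hG2 : ∀ i w, ‖fderiv ℝ (G i) w‖ ≤ 1 / 2) (hGb : ∀ n, UnifBdd n (fun i => fderiv ℝ (G i)))
    (h : ∀ i x, u i x = c x + G i (u i x)) (n : ℕ) : UnifBdd n (fun i => fderiv ℝ (u i)) := by
  have hder : ∀ i x, fderiv ℝ (u i) x = c + (fderiv ℝ (G i) (u i x)).comp (fderiv ℝ (u i) x) := by
    intro i x
    have e : u i = fun x => c x + G i (u i x) := funext (h i)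
    have d1 := ((hu i).differentiable (by simp) x).hasFDerivAt
    have d2 := ((hG i).differentiable (by simp) (u i x)).hasFDerivAt
    have d3 := (c.hasFDerivAt (x := x)).add (d2.comp x d1)
    have := d3.fderiv
    rw [← this]; congr 1
  have step : ∀ m, UnifBdd m (fun i x => fderiv ℝ (G i) (u i x)) →
      UnifBdd m (fun i => fderiv ℝ (u i)) := by
    intro m hm
    refine unifBdd_of_affine_fixedPoint m (F₀ := fun _ _ => c)
      (P := fun i x => ContinuousLinearMap.compL ℝ E X X (fderiv ℝ (G i) (u i x)))
      (fun i => contDiff_fderiv (hu i)) (fun i => contDiff_const)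
      (fun i => contDiff_clm _ ((contDiff_fderiv (hG i)).comp (hu i)))
      (fun i x => (norm_compL_apply_le _).trans (hG2 i (u i x))) hder (unifBdd_const m c) ?_
    exact hm.clm _ (fun i => (contDiff_fderiv (hG i)).comp (hu i))
  induction n with
  | zero => exact step 0 (unifBdd_zero fun i x => hG2 i (u i x))
  | succ n ih =>
    refine step (n + 1) (UnifBdd.comp (fun i => contDiff_fderiv (hG i)) hu (hGb _) fun k hk hk' => ?_)
    obtain ⟨C, hC⟩ := ih (k - 1) (by omega)
    refine ⟨C, fun i x => ?_⟩
    have := hC i x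
    rwa [norm_iteratedFDeriv_fderiv, Nat.sub_add_cancel hk] at this

end Bounds

/-! ### Smooth dependence of fixed points on parameters -/

section FixedPoint

variable {P X : Type} [NormedAddCommGroup P] [NormedSpace ℝ P] [CompleteSpace P]
  [NormedAddCommGroup X] [NormedSpace ℝ X] [CompleteSpace X]

/-- The fixed point of a smooth family of uniform contractions depends smoothly on the parameter, by
the implicit function theorem. -/
theorem exists_contDiff_fixedPoint {F : P × X → X} (hF : ContDiff ℝ (⊤ : ℕ∞) F)
    (hc : ∀ p u v, ‖F (p, u) - F (p, v)‖ ≤ 1 / 2 * ‖u - v‖) :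
    ∃ u : P → X, ContDiff ℝ (⊤ : ℕ∞) u ∧ ∀ p, u p = F (p, u p) := by
  have hcon : ∀ p, ContractingWith (1 / 2) (fun u => F (p, u)) := fun p =>
    ⟨by rw [div_lt_one] <;> norm_num, LipschitzWith.of_dist_le_mul fun u v => by
      simpa [dist_eq_norm] using hc p u v⟩
  refine ⟨fun p => (hcon p).fixedPoint, ?_, fun p => ((hcon p).fixedPoint_isFixedPt).symm⟩
  set u : P → X := fun p => (hcon p).fixedPoint with hu
  have hfix : ∀ p, F (p, u p) = u p := fun p => (hcon p).fixedPoint_isFixedPt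
  have huniq : ∀ p v, F (p, v) = v → v = u p := fun p v hv => (hcon p).fixedPoint_unique hv
  rw [contDiff_iff_contDiffAt]
  intro p
  let f : P × X → X := fun z => z.2 - F z
  have hf : ContDiff ℝ (⊤ : ℕ∞) f := contDiff_snd.sub hF
  have hinv : (fderiv ℝ f (p, u p) ∘L .inr ℝ P X).IsInvertible := by
    set A : X →L[ℝ] X := fderiv ℝ F (p, u p) ∘L .inr ℝ P X with hA
    have dF := (hF.differentiable (by simp) (p, u p)).hasFDerivAt
    have dF2 : HasFDerivAt (fun v => F (p, v)) A (u p) :=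
      dF.comp (u p) (hasFDerivAt_prodMk_right p (u p))
    have hAn : ‖A‖ ≤ 1 / 2 := by
      refine dF2.le_of_lip' (by norm_num) (Eventually.of_forall fun v => ?_)
      exact hc p v (u p)
    have hAn' : ‖A‖ < 1 := hAn.trans_lt (by norm_num)
    have e : fderiv ℝ f (p, u p) ∘L .inr ℝ P X = 1 - A := by
      have : HasFDerivAt f (ContinuousLinearMap.snd ℝ P X - fderiv ℝ F (p, u p)) (p, u p) :=
        hasFDerivAt_snd.sub dF
      rw [this.fderiv, hA]
      ext v; simp
    rw [e]
    exact ⟨ContinuousLinearEquiv.ofUnit (Units.oneSub A hAn'), by ext v; rfl⟩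
  have hcd := hf.contDiffAt (x := (p, u p))
  have h1 := hcd.contDiffAt_implicitFunction (by simp) hinv
  refine h1.congr_of_eventuallyEq ?_
  have h2 := hcd.eventually_apply_implicitFunction (by simp) hinv
  filter_upwards [h2] with q hq
  have h0 : f (p, u p) = 0 := by simp [f, hfix]
  rw [h0] at hq
  exact (huniq q _ (sub_eq_zero.1 hq).symm).symm

end FixedPoint


/-! ### Superposition operators on spaces of continuous functions -/

section Nemytskii

variable {K : Type} [TopologicalSpace K] [CompactSpace K] {E F : Type}
  [NormedAddCommGroup E] [NormedSpace ℝ E] [NormedAddCommGroup F] [NormedSpace ℝ F]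

/-- Pointwise application `(A, v) ↦ (s ↦ A(s) v(s))` of a field of operators to a field of
vectors. -/
def pointwiseApply (K E F : Type) [TopologicalSpace K] [CompactSpace K]
    [NormedAddCommGroup E] [NormedSpace ℝ E] [NormedAddCommGroup F] [NormedSpace ℝ F] :
    C(K, E →L[ℝ] F) →L[ℝ] C(K, E) →L[ℝ] C(K, F) :=
  LinearMap.mkContinuous₂
    (LinearMap.mk₂ ℝ (fun (A : C(K, E →L[ℝ] F)) (v : C(K, E)) =>
        (⟨fun s => A s (v s), A.continuous.clm_apply v.continuous⟩ : C(K, F)))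
      (fun A B v => by ext s; simp) (fun c A v => by ext s; simp)
      (fun A v w => by ext s; simp) (fun c A v => by ext s; simp)) 1
    (fun A v => by
      rw [one_mul]
      refine (ContinuousMap.norm_le _ (by positivity)).2 fun s => ?_
      exact ((A s).le_opNorm _).trans
        (mul_le_mul (A.norm_coe_le_norm s) (v.norm_coe_le_norm s) (norm_nonneg _) (norm_nonneg A)))

@[simp] theorem pointwiseApply_apply (A : C(K, E →L[ℝ] F)) (v : C(K, E)) (s : K) :
    pointwiseApply K E F A v s = A s (v s) := rfl

/-- The superposition operator `u ↦ g ∘ u`, on spaces of continuous functions. -/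
def nem (K : Type) [TopologicalSpace K] (g : E → F) (hg : Continuous g) (u : C(K, E)) : C(K, F) :=
  (⟨g, hg⟩ : C(E, F)).comp u

@[simp] theorem nem_apply (g : E → F) (hg : Continuous g) (u : C(K, E)) (s : K) :
    nem K g hg u s = g (u s) := rfl

theorem hasFDerivAt_nem {g : E → F} (hg : ContDiff ℝ (⊤ : ℕ∞) g) (u : C(K, E)) :
    HasFDerivAt (nem K g hg.continuous)
      (pointwiseApply K E F (nem K (fderiv ℝ g) (contDiff_fderiv hg).continuous u)) u := by
  rw [hasFDerivAt_iff_isLittleO_nhds_zero, Asymptotics.isLittleO_iff]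
  intro ε hε
  have hcont : Continuous (nem K (fderiv ℝ g) (contDiff_fderiv hg).continuous) :=
    ContinuousMap.continuous_postcomp _
  obtain ⟨δ, hδ, H⟩ := Metric.continuousAt_iff.1 (hcont.continuousAt (x := u)) ε hε
  filter_upwards [Metric.ball_mem_nhds (0 : C(K, E)) hδ] with v hv
  rw [mem_ball_zero_iff] at hv
  refine (ContinuousMap.norm_le _ (by positivity)).2 fun s => ?_
  have h1 : ∀ y ∈ Metric.ball (u s) δ, ‖fderiv ℝ g y - fderiv ℝ g (u s)‖ ≤ ε := by
    intro y hy
    have h2 : dist (u + ContinuousMap.const K (y - u s)) u < δ := by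
      rw [dist_eq_norm, add_sub_cancel_left]
      refine lt_of_le_of_lt ((ContinuousMap.norm_le _ (norm_nonneg (y - u s))).2 fun _ => le_rfl) ?_
      rwa [← dist_eq_norm]
    have h3 := (ContinuousMap.dist_le hε.le).1 (H h2).le s
    simpa [dist_eq_norm] using h3
  have h4 := (convex_ball (u s) δ).norm_image_sub_le_of_norm_fderiv_le' (𝕜 := ℝ) (f := g)
    (fun y _ => hg.differentiable (by simp) y) h1 (Metric.mem_ball_self hδ)
    (y := u s + v s) (by
      rw [Metric.mem_ball, dist_eq_norm, add_sub_cancel_left]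
      exact (v.norm_coe_le_norm s).trans_lt hv)
  rw [add_sub_cancel_left] at h4
  exact h4.trans (mul_le_mul_of_nonneg_left (v.norm_coe_le_norm s) hε.le)

/-- The derivative of superposition by `g` is, up to the bounded bilinear map `pointwiseApply`,
superposition by `Dg`; this allows an induction on the order of smoothness. -/
theorem contDiff_nem {g : E → F} (hg : ContDiff ℝ (⊤ : ℕ∞) g) :
    ContDiff ℝ (⊤ : ℕ∞) (nem K g hg.continuous) := by
  refine contDiff_infty.2 fun n => ?_
  induction n generalizing F with
  | zero => exact contDiff_zero.2 (ContinuousMap.continuous_postcomp _)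
  | succ n ih =>
    have h1 : fderiv ℝ (nem K g hg.continuous) = fun u =>
        pointwiseApply K E F (nem K (fderiv ℝ g) (contDiff_fderiv hg).continuous u) :=
      funext fun u => (hasFDerivAt_nem hg u).fderiv
    refine (contDiff_succ_iff_fderiv (n := (n : WithTop ℕ∞))).2
      ⟨fun u => (hasFDerivAt_nem hg u).differentiableAt, by simp, ?_⟩
    rw [h1]
    exact (pointwiseApply K E F).contDiff.comp (ih (contDiff_fderiv hg))

end Nemytskii

/-! ### Primitives of curves on the unit interval -/

section Integration

open unitInterval

variable {E F : Type} [NormedAddCommGroup E] [NormedSpace ℝ E] [NormedAddCommGroup F]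
  [NormedSpace ℝ F]

/-- Extension of a function on `[0,1]` to the real line, constant on both sides. -/
def ext (p : C(unitInterval, E)) (s : ℝ) : E := p (projIcc 0 1 zero_le_one s)

theorem continuous_ext (p : C(unitInterval, E)) : Continuous (ext p) :=
  p.continuous.comp continuous_projIcc

theorem ext_coe (p : C(unitInterval, E)) (s : unitInterval) : ext p s = p s := by
  simp [ext]

theorem norm_ext_le (p : C(unitInterval, E)) (s : ℝ) : ‖ext p s‖ ≤ ‖p‖ := p.norm_coe_le_norm _

/-- The constant curves. -/
def constL (E : Type) [NormedAddCommGroup E] [NormedSpace ℝ E] : E →L[ℝ] C(unitInterval, E) :=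
  LinearMap.mkContinuous
    { toFun := fun x => ContinuousMap.const _ x
      map_add' := fun _ _ => rfl
      map_smul' := fun _ _ => rfl } 1
    (fun x => by
      rw [one_mul]; exact (ContinuousMap.norm_le _ (norm_nonneg x)).2 fun _ => le_rfl)

@[simp] theorem constL_apply (x : E) (s : unitInterval) : constL E x s = x := rfl

theorem continuous_primitive (p : C(unitInterval, E)) :
    Continuous (fun s : ℝ => ∫ r in (0 : ℝ)..s, ext p r) :=
  intervalIntegral.continuous_primitive (fun _ _ => (continuous_ext p).intervalIntegrable _ _) 0

/-- The primitive `s ↦ ∫₀ˢ p`. -/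
def primL (E : Type) [NormedAddCommGroup E] [NormedSpace ℝ E] :
    C(unitInterval, E) →L[ℝ] C(unitInterval, E) :=
  LinearMap.mkContinuous
    { toFun := fun p => ⟨fun s => ∫ r in (0 : ℝ)..s, ext p r,
        (continuous_primitive p).comp continuous_subtype_val⟩
      map_add' := fun p q => by
        ext s
        exact intervalIntegral.integral_add ((continuous_ext p).intervalIntegrable _ _)
          ((continuous_ext q).intervalIntegrable _ _)
      map_smul' := fun c p => by
        ext s
        exact intervalIntegral.integral_smul c _ } 1
    (fun p => by
      rw [one_mul]
      refine (ContinuousMap.norm_le _ (norm_nonneg p)).2 fun s => ?_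
      refine (intervalIntegral.norm_integral_le_of_norm_le_const (C := ‖p‖)
        fun r _ => norm_ext_le p r).trans ?_
      rw [sub_zero, abs_of_nonneg s.2.1]
      exact mul_le_of_le_one_right (norm_nonneg _) s.2.2)

theorem primL_apply (p : C(unitInterval, E)) (s : unitInterval) :
    primL E p s = ∫ r in (0 : ℝ)..s, ext p r := rfl

/-- The integral over `[0,1]`. -/
def intL (E : Type) [NormedAddCommGroup E] [NormedSpace ℝ E] : C(unitInterval, E) →L[ℝ] E :=
  (ContinuousMap.evalCLM ℝ (1 : unitInterval)).comp (primL E)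

theorem intL_apply (p : C(unitInterval, E)) : intL E p = ∫ r in (0 : ℝ)..1, ext p r := rfl

/-- The backward primitive `s ↦ ∫ₛ¹ p`. -/
def backL (E : Type) [NormedAddCommGroup E] [NormedSpace ℝ E] :
    C(unitInterval, E) →L[ℝ] C(unitInterval, E) :=
  (constL E).comp (intL E) - primL E

theorem backL_apply (p : C(unitInterval, E)) (s : unitInterval) :
    backL E p s = intL E p - primL E p s := rfl

theorem primL_zero (p : C(unitInterval, E)) : primL E p 0 = 0 := by
  rw [primL_apply]; simp

theorem primL_one (p : C(unitInterval, E)) : primL E p 1 = intL E p := rfl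

theorem hasDerivAt_primitive [CompleteSpace E] (p : C(unitInterval, E)) (s : ℝ) :
    HasDerivAt (fun s : ℝ => ∫ r in (0 : ℝ)..s, ext p r) (ext p s) s :=
  intervalIntegral.integral_hasDerivAt_right ((continuous_ext p).intervalIntegrable _ _)
    ((continuous_ext p).stronglyMeasurableAtFilter _ _) (continuous_ext p).continuousAt

/-- Time-position curves: `(t, u) ↦ (s ↦ (t s, u(s)))`. -/
def embL (E : Type) [NormedAddCommGroup E] [NormedSpace ℝ E] :
    ℝ × C(unitInterval, E) →L[ℝ] C(unitInterval, ℝ × E) :=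
  LinearMap.mkContinuous
    { toFun := fun z => ⟨fun s => (z.1 * s, z.2 s), by fun_prop⟩
      map_add' := fun z w => by ext s <;> simp [add_mul]
      map_smul' := fun c z => by ext s <;> simp [mul_assoc] } 1
    (fun z => by
      rw [one_mul]
      refine (ContinuousMap.norm_le _ (norm_nonneg z)).2 fun s => ?_
      refine max_le ?_ ((z.2.norm_coe_le_norm s).trans (norm_snd_le z))
      refine le_trans ?_ (norm_fst_le z)
      change ‖z.1 * (s : ℝ)‖ ≤ ‖z.1‖
      rw [norm_mul, Real.norm_eq_abs (s : ℝ), abs_of_nonneg s.2.1]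
      exact mul_le_of_le_one_right (norm_nonneg _) s.2.2)

@[simp] theorem embL_apply (z : ℝ × C(unitInterval, E)) (s : unitInterval) :
    embL E z s = (z.1 * s, z.2 s) := rfl

end Integration

/-! ### Spatial derivatives -/

section Partial

variable {E F : Type} [NormedAddCommGroup E] [NormedSpace ℝ E] [NormedAddCommGroup F]
  [NormedSpace ℝ F]

/-- The spatial derivative of a function of time and space. -/
def dx (g : ℝ × E → F) (z : ℝ × E) : E →L[ℝ] F := (fderiv ℝ g z).comp (.inr ℝ ℝ E)

theorem contDiff_dx {g : ℝ × E → F} (hg : ContDiff ℝ (⊤ : ℕ∞) g) :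
    ContDiff ℝ (⊤ : ℕ∞) (dx g) :=
  (contDiff_fderiv hg).clm_comp contDiff_const

theorem hasFDerivAt_slice {g : ℝ × E → F} (hg : ContDiff ℝ (⊤ : ℕ∞) g) (t : ℝ) (x : E) :
    HasFDerivAt (fun x => g (t, x)) (dx g (t, x)) x :=
  ((hg.differentiable (by simp) (t, x)).hasFDerivAt).comp x (hasFDerivAt_prodMk_right t x)

theorem fderiv_slice {g : ℝ × E → F} (hg : ContDiff ℝ (⊤ : ℕ∞) g) (t : ℝ) :
    fderiv ℝ (fun x => g (t, x)) = fun x => dx g (t, x) :=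
  funext fun x => (hasFDerivAt_slice hg t x).fderiv

theorem contDiff_slice {g : ℝ × E → F} (hg : ContDiff ℝ (⊤ : ℕ∞) g) (t : ℝ) :
    ContDiff ℝ (⊤ : ℕ∞) (fun x => g (t, x)) := hg.comp (contDiff_prodMk_right t)

theorem hasFDerivAt_nem_slice {g : ℝ × E → F} (hg : ContDiff ℝ (⊤ : ℕ∞) g) (t : ℝ)
    (u : C(unitInterval, E)) :
    HasFDerivAt (fun u => nem unitInterval g hg.continuous (embL E (t, u)))
      (pointwiseApply unitInterval E F
        (nem unitInterval (dx g) (contDiff_dx hg).continuous (embL E (t, u)))) u := by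
  have h := (hasFDerivAt_nem hg (embL E (t, u))).comp u
    ((embL E).hasFDerivAt.comp u (hasFDerivAt_prodMk_right t u))
  refine h.congr_fderiv ?_
  ext v s
  simp [dx]

/-- Superposition by a function with bounded spatial derivatives has bounded derivatives. -/
theorem unifBdd_nem {S : Set ℝ} (hS : ∀ t ∈ S, ∀ s ∈ Icc (0 : ℝ) 1, t * s ∈ S) (n : ℕ) :
    ∀ {F : Type} [NormedAddCommGroup F] [NormedSpace ℝ F] {g : ℝ × E → F}
    (hg : ContDiff ℝ (⊤ : ℕ∞) g), UnifBdd n (fun (t : S) x => g (t, x)) →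
    UnifBdd n (fun (t : S) u => nem unitInterval g hg.continuous (embL E (t, u))) := by
  have key : ∀ {F : Type} [NormedAddCommGroup F] [NormedSpace ℝ F] {g : ℝ × E → F}
      (hg : ContDiff ℝ (⊤ : ℕ∞) g), UnifBdd 0 (fun (t : S) x => g (t, x)) →
      UnifBdd 0 (fun (t : S) u => nem unitInterval g hg.continuous (embL E (t, u))) := by
    intro F _ _ g hg h
    obtain ⟨C, hC0, hC⟩ := h.bound
    refine unifBdd_zero (C := C) fun t u => (ContinuousMap.norm_le _ hC0).2 fun s => ?_
    exact hC ⟨t * s, hS t t.2 s s.2⟩ (u s)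
  induction n with
  | zero => exact fun hg h => key hg h
  | succ n ih =>
    intro F _ _ g hg h
    refine unifBdd_succ (key hg (h.mono (Nat.zero_le _))) ?_
    have h1 : (fun t : S => fderiv ℝ (fun x => g (t, x))) = fun t : S => fun x => dx g (t, x) :=
      funext fun t => fderiv_slice hg t
    have h2 : UnifBdd n (fun (t : S) x => dx g (t, x)) := h1 ▸ h.fderiv
    have h3 := ih (contDiff_dx hg) h2
    have h4 := @UnifBdd.clm S C(unitInterval, E) C(unitInterval, E →L[ℝ] F)
      (C(unitInterval, E) →L[ℝ] C(unitInterval, F)) _ _ _ _ _ _ n _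
      (pointwiseApply unitInterval E F) (fun t : S => (contDiff_nem (contDiff_dx hg)).comp
        ((embL E).contDiff.comp (contDiff_prodMk_right (t : ℝ)))) h3
    convert h4 using 2 with t
    exact funext fun u => (hasFDerivAt_nem_slice hg t u).fderiv

end Partial

/-! ### Small-time solution of the abstract fixed-point equation -/

section Abstract

variable {E X Z : Type} [NormedAddCommGroup E] [NormedSpace ℝ E] [NormedAddCommGroup X]
  [NormedSpace ℝ X] [NormedAddCommGroup Z] [NormedSpace ℝ Z]

/-- Derivative bounds for the momentum map in abstract form: `c`, `ev`, `K` stand for the constant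
curves, evaluation at the initial time and the primitive, and `N t` for a superposition operator
whose derivative factors through `D t`. -/
theorem unifBdd_fderiv_affine {b : E → E} (hb : ContDiff ℝ (⊤ : ℕ∞) b) (c : E →L[ℝ] X)
    (ev : X →L[ℝ] E) (K : X →L[ℝ] X) (P : Z →L[ℝ] X →L[ℝ] X) {N : ℝ → X → X} {D : ℝ → X → Z}
    (hN : ∀ t u, HasFDerivAt (N t) (P (D t u)) u) (c2 : ∀ t, ContDiff ℝ (⊤ : ℕ∞) (D t)) (n : ℕ)
    (hb' : UnifBdd n (fun (_ : Icc (-1 : ℝ) 1) x => fderiv ℝ b x))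
    (b2 : UnifBdd n (fun (t : Icc (-1 : ℝ) 1) => D t)) :
    UnifBdd n (fun (t : Icc (-1 : ℝ) 1) =>
      fderiv ℝ (fun u => c (b (ev u)) + (-(t : ℝ)) • K (N t u))) := by
  let L1 : (E →L[ℝ] E) →L[ℝ] (X →L[ℝ] X) :=
    (ContinuousLinearMap.compL ℝ X E X c).comp
      ((ContinuousLinearMap.compL ℝ X E E).flip ev)
  let L2 : Z →L[ℝ] (X →L[ℝ] X) :=
    (ContinuousLinearMap.compL ℝ X X X K).comp P
  have hder : ∀ (t : Icc (-1 : ℝ) 1) (u : X),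
      fderiv ℝ (fun u => c (b (ev u)) + (-(t : ℝ)) • K (N t u)) u = L1 (fderiv ℝ b (ev u)) +
        (-(t : ℝ)) • L2 (D t u) := by
    intro t u
    have d1 : HasFDerivAt (fun u : X => c (b (ev u)))
        (c.comp ((fderiv ℝ b (ev u)).comp ev)) u :=
      c.hasFDerivAt.comp u
        (((hb.differentiable (by simp) (ev u)).hasFDerivAt).comp u ev.hasFDerivAt)
    have d2 := (K.hasFDerivAt.comp u (hN t u)).const_smul (-(t : ℝ))
    exact (d1.add d2).fderiv
  have c1 : ContDiff ℝ (⊤ : ℕ∞) (fun u : X => fderiv ℝ b (ev u)) :=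
    (contDiff_fderiv hb).comp ev.contDiff
  have b1 : UnifBdd n (fun (_ : Icc (-1 : ℝ) 1) (u : X) => fderiv ℝ b (ev u)) := by
    refine UnifBdd.comp (g := fun _ => fderiv ℝ b) (f := fun _ => ev)
      (fun _ => contDiff_fderiv hb) (fun _ => ev.contDiff) hb' fun k hk _ => ?_
    obtain ⟨C, hC⟩ := unifBdd_const (ι := Unit) (E := X) (k - 1) ev (k - 1) le_rfl
    refine ⟨C, fun i x => ?_⟩
    have h1 := hC () x
    have h2 : (fun _ : X => ev) = fderiv ℝ ev := funext fun x => ev.fderiv.symm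
    rw [h2, norm_iteratedFDeriv_fderiv, Nat.sub_add_cancel hk] at h1
    exact h1
  have b3 : UnifBdd n (fun (_ : Icc (-1 : ℝ) 1) (u : X) => L1 (fderiv ℝ b (ev u))) :=
    UnifBdd.clm L1 (fun _ => c1) b1
  have b4 : UnifBdd n (fun (t : Icc (-1 : ℝ) 1) (u : X) => L2 (D t u)) :=
    UnifBdd.clm L2 (fun t => c2 t) b2
  have c4 : ∀ t : Icc (-1 : ℝ) 1, ContDiff ℝ (⊤ : ℕ∞) (fun u : X => L2 (D t u)) := fun t =>
    contDiff_clm L2 (c2 t)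
  have c3 : ContDiff ℝ (⊤ : ℕ∞) (fun u : X => L1 (fderiv ℝ b (ev u))) := contDiff_clm L1 c1
  have b5 := UnifBdd.smul (a := fun t : Icc (-1 : ℝ) 1 => -(t : ℝ)) (A := 1)
    (fun t => by rw [abs_neg]; exact abs_le.2 t.2) c4 b4
  have b6 := UnifBdd.add (fun _ => c3) (fun t => (c4 t).const_smul (-(t : ℝ))) b3 b5
  convert b6 using 2 with t
  exact funext fun u => hder t u

/-- Short-time solution, smooth in the parameters `(t, x)`, of the fixed-point equation
`u = c x - t J(m(t, u))`, with bounds on the spatial derivatives of `m(t, u)`. -/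
theorem exists_smooth_fixedPoint [CompleteSpace E] [CompleteSpace X] (c : E →L[ℝ] X) (J : X →L[ℝ] X)
    {m : ℝ × X → X} (hm : ContDiff ℝ (⊤ : ℕ∞) m)
    (hmb : ∀ n, UnifBdd n (fun (t : Icc (-1 : ℝ) 1) => fderiv ℝ (fun u => m (t, u)))) :
    ∃ T : ℝ, 0 < T ∧ ∃ U : ℝ × E → X, ContDiff ℝ (⊤ : ℕ∞) U ∧
      (∀ t ∈ Ioo (-(2 * T)) (2 * T), ∀ x, U (t, x) = c x - t • J (m (t, U (t, x)))) ∧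
      ∀ n, UnifBdd n (fun (t : Icc (0 : ℝ) T) => fderiv ℝ (fun x => m (t, U (t, x)))) := by
  have hmt : ∀ t : ℝ, ContDiff ℝ (⊤ : ℕ∞) (fun u => m (t, u)) := fun t =>
    hm.comp (contDiff_prodMk_right t)
  let G : ℝ → X → X := fun t u => (-t) • J (m (t, u))
  have hGs : ∀ t, ContDiff ℝ (⊤ : ℕ∞) (G t) := fun t =>
    ((J).contDiff.comp (hmt t)).const_smul (-t)
  have hGd : ∀ t u, fderiv ℝ (G t) u =
      (-t) • (J).comp (fderiv ℝ (fun u => m (t, u)) u) := fun t u =>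
    (((J).hasFDerivAt.comp u
      ((hmt t).differentiable (by simp) u).hasFDerivAt).const_smul (-t)).fderiv
  let L3 : (X →L[ℝ] X) →L[ℝ] (X →L[ℝ] X) := ContinuousLinearMap.compL ℝ X X X (J)
  have hc5 : ∀ t : Icc (-1 : ℝ) 1, ContDiff ℝ (⊤ : ℕ∞)
      (fderiv ℝ (fun u => m (t, u))) := fun t => contDiff_fderiv (hmt t)
  have hb5 : ∀ n, UnifBdd n (fun (t : Icc (-1 : ℝ) 1) (u : X) =>
      L3 (fderiv ℝ (fun u => m (t, u)) u)) := fun n =>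
    @UnifBdd.clm _ X (X →L[ℝ] X) (X →L[ℝ] X) _ _ _ _ _ _ n _ L3 hc5 (hmb n)
  have hc6 : ∀ t : Icc (-1 : ℝ) 1, ContDiff ℝ (⊤ : ℕ∞)
      (fun u => L3 (fderiv ℝ (fun u => m (t, u)) u)) := fun t =>
    contDiff_clm (F := X →L[ℝ] X) (G := X →L[ℝ] X) L3 (hc5 t)
  obtain ⟨C, hC0, hC⟩ := (hb5 0).bound
  -- Below this time scale the fixed-point map has Lipschitz constant at most `1/2`.
  set δ : ℝ := 1 / (2 * C + 2) with hδ
  have hδ0 : 0 < δ := by positivity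
  have hδ1 : δ ≤ 1 := by rw [hδ, div_le_one (by positivity)]; linarith
  have hδC : δ * C ≤ 1 / 2 := by
    rw [hδ, div_mul_eq_mul_div, one_mul, div_le_div_iff₀ (by positivity) (by norm_num)]; linarith
  have hGle : ∀ t, |t| ≤ δ → ∀ u, ‖fderiv ℝ (G t) u‖ ≤ 1 / 2 := by
    intro t ht u
    rw [hGd, norm_smul, norm_neg, Real.norm_eq_abs]
    exact (mul_le_mul ht (hC ⟨t, abs_le.1 (ht.trans hδ1)⟩ u)
      (ContinuousLinearMap.opNorm_nonneg _) hδ0.le).trans hδC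
  have hGlip : ∀ t, |t| ≤ δ → ∀ u v, ‖G t u - G t v‖ ≤ 1 / 2 * ‖u - v‖ := fun t ht u v =>
    convex_univ.norm_image_sub_le_of_norm_fderiv_le (𝕜 := ℝ)
      (fun w _ => (hGs t).differentiable (by simp) w) (fun w _ => hGle t ht w)
      (mem_univ v) (mem_univ u)
  -- A smooth truncation of the time variable keeps the contraction property for all times.
  let χ : ContDiffBump (0 : ℝ) := ⟨δ / 2, δ, by positivity, by linarith⟩
  let θ : ℝ → ℝ := fun t => χ t * t
  have hθs : ContDiff ℝ (⊤ : ℕ∞) θ := χ.contDiff.mul contDiff_id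
  have hθδ : ∀ t, |θ t| ≤ δ := by
    intro t
    rw [abs_mul, abs_of_nonneg χ.nonneg]
    by_cases ht : |t| ≤ δ
    · exact (mul_le_of_le_one_left (abs_nonneg _) χ.le_one).trans ht
    · have : χ t = 0 := χ.zero_of_le_dist (by
        rw [dist_zero_right, Real.norm_eq_abs]; exact (not_le.1 ht).le)
      rw [this, zero_mul]; exact hδ0.le
  have hθid : ∀ t, |t| ≤ δ / 2 → θ t = t := by
    intro t ht
    have : χ t = 1 := χ.one_of_mem_closedBall (by simpa using ht)
    simp [θ, this]
  let F : (ℝ × E) × X → X := fun z => c z.1.2 +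
    (-(θ z.1.1)) • J (m (θ z.1.1, z.2))
  have hθ1 : ContDiff ℝ (⊤ : ℕ∞) (fun z : (ℝ × E) × X => θ z.1.1) :=
    hθs.comp (contDiff_fst.comp contDiff_fst)
  have hF : ContDiff ℝ (⊤ : ℕ∞) F := by
    refine ((c).contDiff.comp (contDiff_snd.comp contDiff_fst)).add
      (hθ1.neg.smul ((J).contDiff.comp (hm.comp (hθ1.prodMk contDiff_snd))))
  obtain ⟨U, hU, hUF⟩ := exists_contDiff_fixedPoint hF (fun p u v => by
    have := hGlip (θ p.1) (hθδ p.1) u v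
    simpa [F, G] using this)
  refine ⟨δ / 4, by positivity, U, hU, fun t ht x => ?_, fun n => ?_⟩
  · have h1 := hUF (t, x)
    have h2 : θ t = t := hθid t (abs_le.2 ⟨by linarith [ht.1], by linarith [ht.2]⟩)
    simp only [F, h2, neg_smul] at h1
    rw [sub_eq_add_neg]; exact h1
  · let ι := Icc (0 : ℝ) (δ / 4)
    have hι : ∀ t : ι, |(t : ℝ)| ≤ δ / 2 := fun t => by
      rw [abs_of_nonneg t.2.1]; linarith [t.2.2]
    have hι1 : ∀ t : ι, (t : ℝ) ∈ Icc (-1 : ℝ) 1 := fun t => abs_le.1 (by linarith [hι t])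
    let j : ι → Icc (-1 : ℝ) 1 := fun t => ⟨t, hι1 t⟩
    have hUs : ∀ t : ι, ContDiff ℝ (⊤ : ℕ∞) (fun x => U (t, x)) := fun t =>
      hU.comp (contDiff_prodMk_right (t : ℝ))
    have hGb : ∀ n, UnifBdd n (fun t : ι => fderiv ℝ (G t)) := by
      intro n
      have h1 := UnifBdd.smul (a := fun t : Icc (-1 : ℝ) 1 => -(t : ℝ)) (A := 1)
        (fun t => by rw [abs_neg]; exact abs_le.2 t.2) hc6 (hb5 n)
      intro k hk
      obtain ⟨C, hC⟩ := h1 k hk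
      refine ⟨C, fun t u => ?_⟩
      change ‖iteratedFDeriv ℝ k (fderiv ℝ (G t)) u‖ ≤ C
      rw [show fderiv ℝ (G t) = _ from funext (hGd t)]
      exact hC (j t) u
    have hUb := unifBdd_fderiv_fixedPoint (ι := ι) (G := fun t => G t) (u := fun t x => U (t, x))
      (c) (fun t => hGs t) hUs (fun t w => hGle t (by linarith [hι t, hδ0]) w) hGb
      (fun t x => by
        have h1 := hUF (t, x)
        have h2 : θ t = t := hθid t (hι t)
        simp only [F, h2] at h1
        exact h1)
    have hmb' : ∀ n, UnifBdd n (fun (t : ι) (x : E) =>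
        fderiv ℝ (fun u => m (t, u)) (U (t, x))) := by
      intro n
      refine UnifBdd.comp (g := fun t : ι => fderiv ℝ (fun u => m (t, u)))
        (f := fun (t : ι) x => U (t, x)) (fun t => contDiff_fderiv (hmt t)) hUs ?_ fun k hk _ => ?_
      · intro k hk
        obtain ⟨C, hC⟩ := hmb n k hk
        exact ⟨C, fun t u => hC (j t) u⟩
      · obtain ⟨C, hC⟩ := hUb k (k - 1) (by omega)
        refine ⟨C, fun t x => ?_⟩
        have := hC t x
        rwa [norm_iteratedFDeriv_fderiv, Nat.sub_add_cancel hk] at this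
    have hfin := @UnifBdd.bilin ι E (X →L[ℝ] X) (E →L[ℝ] X) (E →L[ℝ] X) _ _ _ _ _ _ _ _ n _ _
      (ContinuousLinearMap.compL ℝ E X X) (fun t : ι => (contDiff_fderiv (hmt t)).comp (hUs t))
      (fun t => contDiff_fderiv (hUs t)) (hmb' n) (hUb n)
    convert hfin using 2 with t
    refine funext fun x => ?_
    exact (((hmt t).differentiable (by simp) (U (t, x))).hasFDerivAt.comp x
      ((hUs t).differentiable (by simp) x).hasFDerivAt).fderiv

end Abstract

/-! ### The characteristic curves -/

section Characteristics

variable {E : Type} [NormedAddCommGroup E] [NormedSpace ℝ E]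

/-- The momentum along a curve `u`, run on the time scale `t`:
`p(s) = b(u(0)) - t ∫₀ˢ a(t r, u(r)) dr`. Here `a` stands for `∇V` and `b` for `∇φ₀`. -/
def mom (a : ℝ × E → E) (b : E → E) (ha : Continuous a) (z : ℝ × C(unitInterval, E)) :
    C(unitInterval, E) :=
  constL E (b (z.2 0)) + (-z.1) • primL E (nem unitInterval a ha (embL E z))

theorem contDiff_eval_zero {F : Type} [NormedAddCommGroup F] [NormedSpace ℝ F] {b : E → F}
    (hb : ContDiff ℝ (⊤ : ℕ∞) b) :
    ContDiff ℝ (⊤ : ℕ∞) (fun u : C(unitInterval, E) => b (u 0)) := by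
  let ev : C(unitInterval, E) →L[ℝ] E := ContinuousMap.evalCLM ℝ (0 : unitInterval)
  exact hb.comp ev.contDiff

theorem contDiff_mom {a : ℝ × E → E} {b : E → E} (ha : ContDiff ℝ (⊤ : ℕ∞) a)
    (hb : ContDiff ℝ (⊤ : ℕ∞) b) : ContDiff ℝ (⊤ : ℕ∞) (mom a b ha.continuous) := by
  have h1 : ContDiff ℝ (⊤ : ℕ∞) (fun z : ℝ × C(unitInterval, E) => constL E (b (z.2 0))) :=
    (constL E).contDiff.comp ((contDiff_eval_zero hb).comp contDiff_snd)
  have h2 : ContDiff ℝ (⊤ : ℕ∞) (fun z : ℝ × C(unitInterval, E) =>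
      primL E (nem unitInterval a ha.continuous (embL E z))) :=
    (primL E).contDiff.comp ((contDiff_nem ha).comp (embL E).contDiff)
  exact h1.add (contDiff_fst.neg.smul h2)

theorem mom_apply (a : ℝ × E → E) (b : E → E) (ha : Continuous a) (z : ℝ × C(unitInterval, E))
    (s : unitInterval) : mom a b ha z s =
      b (z.2 0) - z.1 • primL E (nem unitInterval a ha (embL E z)) s := by
  rw [sub_eq_add_neg, ← neg_smul]; rfl

/-- The momentum itself may grow linearly in the curve; its derivatives are bounded. -/
theorem unifBdd_fderiv_mom {a : ℝ × E → E} {b : E → E} (ha : ContDiff ℝ (⊤ : ℕ∞) a)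
    (hb : ContDiff ℝ (⊤ : ℕ∞) b)
    (ha' : ∀ n, UnifBdd n (fun (t : Icc (-1 : ℝ) 1) x => dx a (t, x)))
    (hb' : ∀ n, UnifBdd n (fun (_ : Icc (-1 : ℝ) 1) x => fderiv ℝ b x)) (n : ℕ) :
    UnifBdd n (fun (t : Icc (-1 : ℝ) 1) => fderiv ℝ (fun u => mom a b ha.continuous (t, u))) := by
  have hS : ∀ t ∈ Icc (-1 : ℝ) 1, ∀ s ∈ Icc (0 : ℝ) 1, t * s ∈ Icc (-1 : ℝ) 1 := by
    intro t ht s hs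
    constructor <;> nlinarith [ht.1, ht.2, hs.1, hs.2]
  exact unifBdd_fderiv_affine hb (constL E) (ContinuousMap.evalCLM ℝ (0 : unitInterval)) (primL E)
    (pointwiseApply unitInterval E E)
    (N := fun t u => nem unitInterval a ha.continuous (embL E (t, u)))
    (D := fun t u => nem unitInterval (dx a) (contDiff_dx ha).continuous (embL E (t, u)))
    (hasFDerivAt_nem_slice ha)
    (fun t => (contDiff_nem (contDiff_dx ha)).comp
      ((embL E).contDiff.comp (contDiff_prodMk_right t))) n (hb' n)
    (unifBdd_nem hS n (contDiff_dx ha) (ha' n))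

/-- Short-time solution of the characteristic system. The curve `U (t, x)` is the projection to
position space of the bicharacteristic that issues from the Lagrangian manifold `ξ = b(y)` at time
`0` and reaches the point `x` at time `t`, rescaled to `[0,1]`. It depends smoothly on `(t, x)`, and
all spatial derivatives of positive order of the associated momentum are bounded. -/
theorem exists_characteristics [CompleteSpace E] {a : ℝ × E → E} {b : E → E}
    (ha : ContDiff ℝ (⊤ : ℕ∞) a) (hb : ContDiff ℝ (⊤ : ℕ∞) b)
    (ha' : ∀ n, UnifBdd n (fun (t : Icc (-1 : ℝ) 1) x => dx a (t, x)))
    (hb' : ∀ n, UnifBdd n (fun (_ : Icc (-1 : ℝ) 1) x => fderiv ℝ b x)) :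
    ∃ T : ℝ, 0 < T ∧ ∃ U : ℝ × E → C(unitInterval, E), ContDiff ℝ (⊤ : ℕ∞) U ∧
      (∀ t ∈ Ioo (-(2 * T)) (2 * T), ∀ x,
        U (t, x) = constL E x - t • backL E (mom a b ha.continuous (t, U (t, x)))) ∧
      ∀ n, UnifBdd n (fun (t : Icc (0 : ℝ) T) =>
        fderiv ℝ (fun x => mom a b ha.continuous (t, U (t, x)))) :=
  exists_smooth_fixedPoint (constL E) (backL E) (contDiff_mom ha hb)
    (unifBdd_fderiv_mom ha hb ha' hb')

end Characteristics

/-! ### The Hamilton equations and the energy identity -/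

section Phase

open InnerProductSpace

variable {E : Type} [NormedAddCommGroup E] [InnerProductSpace ℝ E]

/-- Pointwise inner product of two curves. -/
def inn (f g : C(unitInterval, E)) : C(unitInterval, ℝ) :=
  ⟨fun s => inner ℝ (f s) (g s), f.continuous.inner g.continuous⟩

@[simp] theorem inn_apply (f g : C(unitInterval, E)) (s : unitInterval) :
    inn f g s = inner ℝ (f s) (g s) := rfl

/-- The fundamental theorem of calculus on `[0,1]`. -/
theorem intL_eq_sub [CompleteSpace E] {f : C(unitInterval, E)} {Φ : ℝ → E}
    (h : ∀ s : unitInterval, HasDerivAt Φ (f s) s) : intL E f = Φ 1 - Φ 0 := by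
  rw [intL_apply]
  refine intervalIntegral.integral_eq_sub_of_hasDerivAt (fun s hs => ?_)
    ((continuous_ext f).intervalIntegrable _ _)
  rw [uIcc_of_le zero_le_one] at hs
  have := h ⟨s, hs⟩
  rwa [← ext_coe f ⟨s, hs⟩] at this

variable [CompleteSpace E]

theorem intL_inn_constL (x : E) (g : C(unitInterval, E)) :
    intL ℝ (inn (constL E x) g) = inner ℝ x (intL E g) := by
  have h := intL_eq_sub (f := inn (constL E x) g)
    (Φ := fun s => inner ℝ x (∫ r in (0 : ℝ)..s, ext g r)) (fun s => by
      have h1 := (hasDerivAt_const (s : ℝ) x).inner ℝ (hasDerivAt_primitive g s)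
      rw [ext_coe, inner_zero_left, add_zero] at h1
      exact h1)
  rw [h, intL_apply]; simp

/-- Integration by parts: the forward and the backward primitives are adjoint to each other. -/
theorem intL_inn_primL (f g : C(unitInterval, E)) :
    intL ℝ (inn (primL E f) g) = intL ℝ (inn f (backL E g)) := by
  have h := intL_eq_sub (f := inn f (backL E g) - inn (primL E f) g)
    (Φ := fun s => inner ℝ (∫ r in (0 : ℝ)..s, ext f r) (intL E g - ∫ r in (0 : ℝ)..s, ext g r))
    (fun s => by
      have h1 := (hasDerivAt_primitive f s).inner ℝ ((hasDerivAt_primitive g s).const_sub (intL E g))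
      refine h1.congr_deriv ?_
      rw [ext_coe, ext_coe, ContinuousMap.sub_apply, inn_apply, inn_apply, inner_neg_right,
        backL_apply, primL_apply, primL_apply]
      ring)
  rw [map_sub] at h
  rw [eq_comm, ← sub_eq_zero, h, intL_apply]
  simp

/-- The Riesz isomorphism, from linear forms to vectors. -/
def riesz (E : Type) [NormedAddCommGroup E] [InnerProductSpace ℝ E] [CompleteSpace E] :
    (E →L[ℝ] ℝ) →L[ℝ] E :=
  LinearMap.mkContinuous
    { toFun := fun f => (toDual ℝ E).symm f
      map_add' := fun f g => map_add _ f g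
      map_smul' := fun c f => by simp } 1
    (fun f => by simp)

theorem inner_riesz (f : E →L[ℝ] ℝ) (v : E) : inner ℝ (riesz E f) v = f v :=
  toDual_symm_apply

/-- The spatial gradient of a function of time and space. -/
def gradx (W : ℝ × E → ℝ) (z : ℝ × E) : E := riesz E (dx W z)

theorem contDiff_gradx {W : ℝ × E → ℝ} (hW : ContDiff ℝ (⊤ : ℕ∞) W) :
    ContDiff ℝ (⊤ : ℕ∞) (gradx W) := contDiff_clm (riesz E) (contDiff_dx hW)

/-- The kinetic energy. -/
def kin (p : E) : ℝ := 1 / 2 * ‖p‖ ^ 2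

theorem contDiff_kin : ContDiff ℝ (⊤ : ℕ∞) (kin (E := E)) :=
  contDiff_const.mul (contDiff_norm_sq ℝ)

theorem hasFDerivAt_kin (p : E) : HasFDerivAt kin (innerSL ℝ p) p := by
  have h := (hasStrictFDerivAt_norm_sq (F := E) p).hasFDerivAt.const_mul (1 / 2 : ℝ)
  refine h.congr_fderiv ?_
  ext v
  simp

theorem fderiv_kin (p q : E) : fderiv ℝ kin p q = inner ℝ p q := by
  rw [(hasFDerivAt_kin p).fderiv]; rfl

theorem fderiv_apply_prod (W : ℝ × E → ℝ) (z : ℝ × E) (τ : ℝ) (v : E) :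
    fderiv ℝ W z (τ, v) = τ * fderiv ℝ W z (1, 0) + inner ℝ (gradx W z) v := by
  have h : ((τ, v) : ℝ × E) = τ • (1, 0) + (0, v) := by simp
  rw [gradx, inner_riesz, h, map_add, map_smul]
  rfl

/-- The Hamilton equations on the time scale `t`, for continuous curves `u`, `p` on `[0,1]`, with
final position `x` and initial momentum `p₀`, in integrated form. -/
structure IsChar (W : ℝ × E → ℝ) (hW : ContDiff ℝ (⊤ : ℕ∞) W) (t : ℝ) (x p₀ : E)
    (u p : C(unitInterval, E)) : Prop where
  pos : u = constL E x - t • backL E p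
  mom : p = constL E p₀ - t • primL E (nem unitInterval (gradx W) (contDiff_gradx hW).continuous
    (embL E (t, u)))

variable {W : ℝ × E → ℝ} {hW : ContDiff ℝ (⊤ : ℕ∞) W} {t : ℝ} {x p₀ : E}
  {u p : C(unitInterval, E)}

/-- The position extends to a curve on the real line that is differentiable in the two-sided sense
on `[0,1]`, with velocity `t p`. -/
theorem IsChar.exists_pos (h : IsChar W hW t x p₀ u p) :
    ∃ y : ℝ → E, (∀ s : unitInterval, y s = u s) ∧
      ∀ s : unitInterval, HasDerivAt y (t • p s) s := by
  refine ⟨fun s => x - t • (intL E p - ∫ r in (0 : ℝ)..s, ext p r), fun s => ?_, fun s => ?_⟩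
  · rw [h.pos]; rfl
  · have h1 := (((hasDerivAt_primitive p s).const_sub (intL E p)).const_smul t).const_sub x
    refine h1.congr_deriv ?_
    rw [ext_coe, smul_neg, neg_neg]

/-- The momentum extends to a curve on the real line that is differentiable in the two-sided sense
on `[0,1]`, with derivative `-t ∇W`. -/
theorem IsChar.exists_mom (h : IsChar W hW t x p₀ u p) :
    ∃ y : ℝ → E, (∀ s : unitInterval, y s = p s) ∧
      ∀ s : unitInterval, HasDerivAt y (-(t • gradx W (t * s, u s))) s := by
  set A := nem unitInterval (gradx W) (contDiff_gradx hW).continuous (embL E (t, u)) with hA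
  refine ⟨fun s => p₀ - t • ∫ r in (0 : ℝ)..s, ext A r, fun s => ?_, fun s => ?_⟩
  · rw [h.mom]; rfl
  · have h1 := ((hasDerivAt_primitive A s).const_smul t).const_sub p₀
    refine h1.congr_deriv ?_
    rw [ext_coe]; rfl

theorem IsChar.pos_one (h : IsChar W hW t x p₀ u p) : u 1 = x := by
  rw [h.pos, ContinuousMap.sub_apply, ContinuousMap.smul_apply, backL_apply, primL_one, sub_self,
    smul_zero, sub_zero, constL_apply]

/-- The time derivative of the potential along a curve. -/
def potT (hW : ContDiff ℝ (⊤ : ℕ∞) W) (t : ℝ) (u : C(unitInterval, E)) : C(unitInterval, ℝ) :=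
  nem unitInterval (fun z => fderiv ℝ W z (1, 0))
    ((contDiff_fderiv hW).continuous.clm_apply continuous_const) (embL E (t, u))

/-- The identity `∫₀¹ (H + s t ∂_t W) ds = H(1)` for the Hamiltonian `H` along a characteristic.
It is the integrated form of `H' = t ∂_t W`. -/
theorem IsChar.energy (h : IsChar W hW t x p₀ u p) :
    intL ℝ (nem unitInterval kin contDiff_kin.continuous p) +
      intL ℝ (nem unitInterval W hW.continuous (embL E (t, u))) +
      t * intL ℝ ((⟨fun s => s, continuous_subtype_val⟩ : C(unitInterval, ℝ)) * potT hW t u) =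
    kin (p 1) + W (t, x) := by
  obtain ⟨y, hy, hy'⟩ := h.exists_pos
  obtain ⟨q, hq, hq'⟩ := h.exists_mom
  have key := intL_eq_sub (f := nem unitInterval kin contDiff_kin.continuous p +
      nem unitInterval W hW.continuous (embL E (t, u)) +
      t • ((⟨fun s => s, continuous_subtype_val⟩ : C(unitInterval, ℝ)) * potT hW t u))
    (Φ := fun s => s * (kin (q s) + W (t * s, y s))) (fun s => by
      have h1 := (hasFDerivAt_kin (q s)).comp_hasDerivAt (s : ℝ) (hq' s)
      have h2 : HasDerivAt (fun s : ℝ => (t * s, y s)) (t * 1, t • p s) s :=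
        ((hasDerivAt_id (s : ℝ)).const_mul t).prodMk (hy' s)
      have h3 := ((hW.differentiable (by simp) (t * s, y s)).hasFDerivAt).comp_hasDerivAt (s : ℝ) h2
      refine ((hasDerivAt_id (s : ℝ)).mul (h1.add h3)).congr_deriv ?_
      rw [fderiv_apply_prod, hq, hy, innerSL_apply_apply, inner_neg_right, inner_smul_right,
        inner_smul_right, real_inner_comm (p s)]
      simp [potT, hq, hy]
      ring)
  rw [map_add, map_add, map_smul, smul_eq_mul] at key
  have e1 : q 1 = p 1 := hq 1
  have e2 : y 1 = x := (hy 1).trans h.pos_one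
  rw [key, e1, e2]
  simp

end Phase

/-! ### The action and its first variation -/

section Action

open InnerProductSpace

variable {E : Type} [NormedAddCommGroup E] [InnerProductSpace ℝ E] [CompleteSpace E]

/-- The initial phase at the foot of the curve `U z` plus the action
`t ∫₀¹ (|P|²/2 - W(t s, U)) ds` along it, where `z = (t, x)`. -/
def phase (φ₀ : E → ℝ) {W : ℝ × E → ℝ} (hW : ContDiff ℝ (⊤ : ℕ∞) W)
    (U P : ℝ × E → C(unitInterval, E)) (z : ℝ × E) : ℝ :=
  φ₀ (U z 0) + z.1 * (intL ℝ (nem unitInterval kin contDiff_kin.continuous (P z)) -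
    intL ℝ (nem unitInterval W hW.continuous (embL E (z.1, U z))))

variable {φ₀ : E → ℝ} {W : ℝ × E → ℝ} {U P : ℝ × E → C(unitInterval, E)}

theorem contDiff_phase (hφ : ContDiff ℝ (⊤ : ℕ∞) φ₀) (hW : ContDiff ℝ (⊤ : ℕ∞) W)
    (hU : ContDiff ℝ (⊤ : ℕ∞) U) (hP : ContDiff ℝ (⊤ : ℕ∞) P) :
    ContDiff ℝ (⊤ : ℕ∞) (phase φ₀ hW U P) := by
  have h1 : ContDiff ℝ (⊤ : ℕ∞) (fun z => φ₀ (U z 0)) := (contDiff_eval_zero hφ).comp hU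
  have h2 : ContDiff ℝ (⊤ : ℕ∞) (fun z =>
      intL ℝ (nem unitInterval kin contDiff_kin.continuous (P z))) :=
    contDiff_clm (intL ℝ) ((contDiff_nem contDiff_kin).comp hP)
  have h3 : ContDiff ℝ (⊤ : ℕ∞) (fun z =>
      intL ℝ (nem unitInterval W hW.continuous (embL E (z.1, U z)))) :=
    contDiff_clm (intL ℝ) ((contDiff_nem hW).comp (contDiff_clm (embL E) (contDiff_fst.prodMk hU)))
  exact h1.add (contDiff_fst.mul (h2.sub h3))

/-- The first variation of the action. -/
theorem fderiv_phase (hφ : ContDiff ℝ (⊤ : ℕ∞) φ₀) (hW : ContDiff ℝ (⊤ : ℕ∞) W)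
    (hU : ContDiff ℝ (⊤ : ℕ∞) U) (hP : ContDiff ℝ (⊤ : ℕ∞) P) (z h : ℝ × E) :
    fderiv ℝ (phase φ₀ hW U P) z h = inner ℝ (riesz E (fderiv ℝ φ₀ (U z 0))) (fderiv ℝ U z h 0) +
      (z.1 * (intL ℝ (inn (P z) (fderiv ℝ P z h)) -
        (h.1 * intL ℝ ((⟨fun s => s, continuous_subtype_val⟩ : C(unitInterval, ℝ)) *
            potT hW z.1 (U z)) +
          intL ℝ (inn (nem unitInterval (gradx W) (contDiff_gradx hW).continuous
            (embL E (z.1, U z))) (fderiv ℝ U z h)))) +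
      (intL ℝ (nem unitInterval kin contDiff_kin.continuous (P z)) -
        intL ℝ (nem unitInterval W hW.continuous (embL E (z.1, U z)))) * h.1) := by
  have dU := (hU.differentiable (by simp) z).hasFDerivAt
  have dP := (hP.differentiable (by simp) z).hasFDerivAt
  let ev : C(unitInterval, E) →L[ℝ] E := ContinuousMap.evalCLM ℝ (0 : unitInterval)
  have h1 : HasFDerivAt (fun z => φ₀ (U z 0))
      ((fderiv ℝ φ₀ (U z 0)).comp (ev.comp (fderiv ℝ U z))) z :=
    ((hφ.differentiable (by simp) (U z 0)).hasFDerivAt).comp z (ev.hasFDerivAt.comp z dU)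
  have h2 : HasFDerivAt (fun z => intL ℝ (nem unitInterval kin contDiff_kin.continuous (P z))) _ z :=
    (intL ℝ).hasFDerivAt.comp z ((hasFDerivAt_nem contDiff_kin (P z)).comp z dP)
  have h3 : HasFDerivAt (fun z =>
      intL ℝ (nem unitInterval W hW.continuous (embL E (z.1, U z)))) _ z :=
    (intL ℝ).hasFDerivAt.comp z ((hasFDerivAt_nem hW (embL E (z.1, U z))).comp z
      ((embL E).hasFDerivAt.comp z (hasFDerivAt_fst.prodMk dU)))
  have h4 : HasFDerivAt (phase φ₀ hW U P) _ z := h1.add (hasFDerivAt_fst.mul (h2.sub h3))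
  have e1 : pointwiseApply unitInterval E ℝ (nem unitInterval (fderiv ℝ kin)
      (contDiff_fderiv contDiff_kin).continuous (P z)) (fderiv ℝ P z h) =
        inn (P z) (fderiv ℝ P z h) := by
    ext s
    exact fderiv_kin _ _
  have e2 : pointwiseApply unitInterval (ℝ × E) ℝ (nem unitInterval (fderiv ℝ W)
      (contDiff_fderiv hW).continuous (embL E (z.1, U z))) (embL E (h.1, fderiv ℝ U z h)) =
        h.1 • ((⟨fun s => s, continuous_subtype_val⟩ : C(unitInterval, ℝ)) *
            potT hW z.1 (U z)) + inn (nem unitInterval (gradx W) (contDiff_gradx hW).continuous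
            (embL E (z.1, U z))) (fderiv ℝ U z h) := by
    ext s
    refine (fderiv_apply_prod W _ _ _).trans ?_
    rw [mul_assoc]
    rfl
  rw [← smul_eq_mul h.1 (intL ℝ _), ← map_smul, ← map_add, ← e1, ← e2, inner_riesz, h4.fderiv]
  rfl

/-- On a family of characteristics starting from the graph of `∇φ₀`, the differential of the phase
is `p(1) dx - H(1) dt`. -/
theorem fderiv_phase_of_isChar (hφ : ContDiff ℝ (⊤ : ℕ∞) φ₀) (hW : ContDiff ℝ (⊤ : ℕ∞) W)
    (hU : ContDiff ℝ (⊤ : ℕ∞) U) (hP : ContDiff ℝ (⊤ : ℕ∞) P) (z : ℝ × E)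
    (hc : ∀ᶠ w in nhds z, IsChar W hW w.1 w.2 (riesz E (fderiv ℝ φ₀ (U w 0))) (U w) (P w))
    (h : ℝ × E) :
    fderiv ℝ (phase φ₀ hW U P) z h = inner ℝ (P z 1) h.2 - h.1 * (kin (P z 1) + W z) := by
  have hz := hc.self_of_nhds
  have dP := (hP.differentiable (by simp) z).hasFDerivAt
  have dv : fderiv ℝ U z h = constL E h.2 -
      (z.1 • backL E (fderiv ℝ P z h) + h.1 • backL E (P z)) := by
    have e1 : U =ᶠ[nhds z] fun w => constL E w.2 - w.1 • backL E (P w) := hc.mono fun w hw => hw.pos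
    have d1 : HasFDerivAt (fun w : ℝ × E => constL E w.2 - w.1 • backL E (P w)) _ z :=
      ((constL E).hasFDerivAt.comp z hasFDerivAt_snd).sub
        (hasFDerivAt_fst.smul ((backL E).hasFDerivAt.comp z dP))
    rw [e1.fderiv_eq, d1.fderiv]
    rfl
  rw [fderiv_phase hφ hW hU hP, ← hz.energy]
  set p₀ := riesz E (fderiv ℝ φ₀ (U z 0)) with hp₀
  set q := fderiv ℝ P z h
  set A := nem unitInterval (gradx W) (contDiff_gradx hW).continuous (embL E (z.1, U z)) with hA
  have hm : z.1 • primL E A = constL E p₀ - P z := by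
    conv_rhs => rw [hz.mom]
    rw [sub_sub_cancel]
  have hp1 : P z 1 = p₀ - z.1 • intL E A := by
    conv_lhs => rw [hz.mom]
    rfl
  have hv0 : fderiv ℝ U z h 0 = h.2 - (z.1 • intL E q + h.1 • intL E (P z)) := by
    rw [dv]
    simp [backL_apply, primL_zero]
  have inn_sub : ∀ f g k : C(unitInterval, E), inn f (g - k) = inn f g - inn f k := fun f g k => by
    ext s; simp [inner_sub_right]
  have inn_add : ∀ f g k : C(unitInterval, E), inn f (g + k) = inn f g + inn f k := fun f g k => by
    ext s; simp [inner_add_right]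
  have inn_smul : ∀ (c : ℝ) (f g : C(unitInterval, E)), inn f (c • g) = c • inn f g :=
    fun c f g => by ext s; simp [inner_smul_right]
  have inn_comm : ∀ f g : C(unitInterval, E), inn f g = inn g f := fun f g => by
    ext s; simp [real_inner_comm]
  have hkey : ∀ g : C(unitInterval, E), z.1 * intL ℝ (inn A (backL E g)) =
      inner ℝ p₀ (intL E g) - intL ℝ (inn (P z) g) := fun g => by
    rw [← intL_inn_primL, ← smul_eq_mul, ← map_smul, inn_comm, ← inn_smul, hm, inn_comm, inn_comm,
      inn_sub, map_sub, inn_comm, intL_inn_constL, inn_comm g]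
  have hkin : intL ℝ (inn (P z) (P z)) =
      2 * intL ℝ (nem unitInterval kin contDiff_kin.continuous (P z)) := by
    rw [← smul_eq_mul, ← map_smul]
    congr 1
    ext s
    simp [kin]
  have hAv : intL ℝ (inn A (fderiv ℝ U z h)) = inner ℝ (intL E A) h.2 -
      (z.1 * intL ℝ (inn A (backL E q)) + h.1 * intL ℝ (inn A (backL E (P z)))) := by
    rw [dv, inn_sub, inn_add, inn_smul, inn_smul, map_sub, map_add, map_smul, map_smul, inn_comm,
      intL_inn_constL, real_inner_comm]
    rfl
  have k1 := hkey q
  have k2 := hkey (P z)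
  rw [hkin] at k2
  rw [hAv, hv0, hp1, inner_sub_right, inner_add_right, inner_smul_right, inner_smul_right,
    inner_sub_left, real_inner_smul_left]
  linear_combination z.1 * k1 + h.1 * k2

end Action

/-! ### Solutions along characteristics -/

section Uniqueness

open InnerProductSpace

variable {E : Type} [NormedAddCommGroup E] [InnerProductSpace ℝ E] [CompleteSpace E]

/-- The derivative of the spatial gradient, expressed by the second derivative. -/
theorem inner_fderiv_gradx {ψ : ℝ × E → ℝ} (hψ : ContDiff ℝ (⊤ : ℕ∞) ψ) (z w : ℝ × E) (v : E) :
    inner ℝ (fderiv ℝ (gradx ψ) z w) v = fderiv ℝ (fderiv ℝ ψ) z w (0, v) := by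
  have h1 : HasFDerivAt (fun z => inner ℝ (gradx ψ z) v) _ z :=
    ((contDiff_gradx hψ).differentiable (by simp) z).hasFDerivAt.inner ℝ (hasFDerivAt_const v z)
  have h2 : HasFDerivAt (fun z => fderiv ℝ ψ z (0, v)) _ z :=
    ((contDiff_fderiv hψ).differentiable (by simp) z).hasFDerivAt.clm_apply
      (hasFDerivAt_const ((0, v) : ℝ × E) z)
  have h3 : (fun z => inner ℝ (gradx ψ z) v) = fun z => fderiv ℝ ψ z (0, v) :=
    funext fun z => inner_riesz _ v
  rw [h3] at h1
  have := congrArg (fun L => L w) (h1.unique h2)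
  simpa [fderivInnerCLM_apply] using this

/-- The spatial gradient `g` of a solution of the eikonal equation satisfies
`∂_t g + (D_x g) g + ∇_x W = 0`. -/
theorem fderiv_gradx_of_eikonal {ψ W : ℝ × E → ℝ} (hψ : ContDiff ℝ (⊤ : ℕ∞) ψ)
    (hW : ContDiff ℝ (⊤ : ℕ∞) W) {τ : ℝ}
    (heik : ∀ y, fderiv ℝ ψ (τ, y) (1, 0) + kin (gradx ψ (τ, y)) + W (τ, y) = 0) (y : E) :
    fderiv ℝ (gradx ψ) (τ, y) (1, 0) =
      -(dx (gradx ψ) (τ, y) (gradx ψ (τ, y))) - gradx W (τ, y) := by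
  have hle : ∀ k : ℕ, (k : WithTop ℕ∞) ≤ (⊤ : ℕ∞) := fun k => by exact_mod_cast le_top
  have hsymm : ∀ z v w, fderiv ℝ (fderiv ℝ ψ) z v w = fderiv ℝ (fderiv ℝ ψ) z w v := fun z v w =>
    (hψ.contDiffAt.isSymmSndFDerivAt (by
        rw [minSmoothness_of_isRCLikeNormedField]
        exact hle 2)) v w
  refine ext_inner_right ℝ fun v => ?_
  have h1 : HasFDerivAt (fun y => fderiv ℝ ψ (τ, y) (1, 0)) _ y :=
    (((contDiff_fderiv hψ).differentiable (by simp) (τ, y)).hasFDerivAt.comp y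
      (hasFDerivAt_prodMk_right τ y)).clm_apply (hasFDerivAt_const ((1, 0) : ℝ × E) y)
  have h2 : HasFDerivAt (fun y => kin (gradx ψ (τ, y))) _ y :=
    (hasFDerivAt_kin _).comp y (hasFDerivAt_slice (contDiff_gradx hψ) τ y)
  have h3 := hasFDerivAt_slice hW τ y
  have h4 : HasFDerivAt (fun _ : E => (0 : ℝ)) _ y :=
    ((h1.add h2).add h3).congr_of_eventuallyEq (Eventually.of_forall fun y => (heik y).symm)
  have h5 := congrArg (fun L => L v) (h4.unique (hasFDerivAt_const (0 : ℝ) y))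
  have h6 : fderiv ℝ (fderiv ℝ ψ) (τ, y) (0, v) (1, 0) +
      inner ℝ (gradx ψ (τ, y)) (dx (gradx ψ) (τ, y) v) + dx W (τ, y) v = 0 := by
    simpa using h5
  have h7 : inner ℝ (gradx ψ (τ, y)) (dx (gradx ψ) (τ, y) v) =
      inner ℝ (dx (gradx ψ) (τ, y) (gradx ψ (τ, y))) v := by
    rw [real_inner_comm]
    refine (inner_fderiv_gradx hψ (τ, y) (0, v) _).trans ?_
    rw [hsymm]
    exact (inner_fderiv_gradx hψ (τ, y) (0, _) v).symm
  rw [inner_fderiv_gradx hψ, hsymm, inner_sub_left, inner_neg_left]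
  have h8 : inner ℝ (gradx W (τ, y)) v = dx W (τ, y) v := inner_riesz _ v
  rw [h7] at h6
  rw [h8]
  linarith

/-- The method of characteristics: a solution of the eikonal equation with bounded Hessian is the
initial phase plus the action along any characteristic. -/
theorem IsChar.eq_action {φ₀ : E → ℝ} {ψ W : ℝ × E → ℝ} (hψ : ContDiff ℝ (⊤ : ℕ∞) ψ)
    {hW : ContDiff ℝ (⊤ : ℕ∞) W} {T C t : ℝ} {x : E} {u p : C(unitInterval, E)}
    (heik : ∀ τ ∈ Icc 0 T, ∀ y, fderiv ℝ ψ (τ, y) (1, 0) + kin (gradx ψ (τ, y)) + W (τ, y) = 0)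
    (hψ0 : ∀ y, ψ (0, y) = φ₀ y)
    (hC : ∀ τ ∈ Icc 0 T, ∀ y, ‖dx (gradx ψ) (τ, y)‖ ≤ C) (ht : t ∈ Icc 0 T)
    (h : IsChar W hW t x (riesz E (fderiv ℝ φ₀ (u 0))) u p) :
    ψ (t, x) = φ₀ (u 0) + t * (intL ℝ (nem unitInterval kin contDiff_kin.continuous p) -
      intL ℝ (nem unitInterval W hW.continuous (embL E (t, u)))) := by
  obtain ⟨y, hy, hy'⟩ := h.exists_pos
  obtain ⟨q, hq, hq'⟩ := h.exists_mom
  have hts : ∀ s : unitInterval, t * s ∈ Icc 0 T := fun s =>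
    ⟨mul_nonneg ht.1 s.2.1, (mul_le_of_le_one_right ht.1 s.2.2).trans ht.2⟩
  have hcurve : ∀ s : unitInterval,
      HasDerivAt (fun s : ℝ => (t * s, y s)) (t * 1, t • p s) s := fun s =>
    ((hasDerivAt_id (s : ℝ)).const_mul t).prodMk (hy' s)
  -- The defect between the gradient of `ψ` along the curve and the momentum.
  let f : ℝ → E := fun s => gradx ψ (t * s, y s) - q s
  let f' : ℝ → E := fun s => -(t • dx (gradx ψ) (t * s, y s) (f s))
  have hf : ∀ s : unitInterval, HasDerivAt f (f' s) s := by
    intro s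
    have h1 := (((contDiff_gradx hψ).differentiable (by simp)
      (t * s, y s)).hasFDerivAt).comp_hasDerivAt (s : ℝ) (hcurve s)
    refine (h1.sub (hq' s)).congr_deriv ?_
    have h2 : ((t * 1, t • p s) : ℝ × E) = t • (1, 0) + t • (0, p s) := by simp
    have h3 : fderiv ℝ (gradx ψ) (t * s, y s) (0, p s) = dx (gradx ψ) (t * s, y s) (p s) := rfl
    rw [h2, map_add, map_smul, map_smul, h3, fderiv_gradx_of_eikonal hψ hW (heik _ (hts s))]
    simp only [f', f, hq, hy, map_sub, smul_sub, smul_neg]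
    abel
  have hf0 : f 0 = 0 := by
    have e1 : y 0 = u 0 := hy 0
    have e2 : q 0 = p 0 := hq 0
    have e3 : p 0 = riesz E (fderiv ℝ φ₀ (u 0)) := by
      rw [h.mom, ContinuousMap.sub_apply, ContinuousMap.smul_apply, primL_zero, smul_zero, sub_zero,
        constL_apply]
    have e4 : gradx ψ (0, u 0) = riesz E (fderiv ℝ φ₀ (u 0)) := by
      rw [gradx, ← congrFun (fderiv_slice hψ 0) (u 0)]
      congr 2
      exact funext hψ0
    simp only [f, mul_zero, e1, e2, e3, e4, sub_self]
  have hfz : ∀ s ∈ Icc (0 : ℝ) 1, f s = 0 :=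
    eq_zero_of_abs_deriv_le_mul_abs_self_of_eq_zero_right (K := t * C) (f' := f')
      (fun s hs => (hf ⟨s, hs⟩).continuousAt.continuousWithinAt)
      (fun s hs => (hf ⟨s, hs.1, hs.2.le⟩).hasDerivWithinAt) hf0
      (fun s hs => by
        rw [norm_neg, norm_smul, Real.norm_eq_abs, abs_of_nonneg ht.1, mul_assoc]
        exact mul_le_mul_of_nonneg_left (((dx (gradx ψ) (t * s, y s)).le_opNorm _).trans
          (mul_le_mul_of_nonneg_right (hC _ (hts ⟨s, hs.1, hs.2.le⟩) _) (norm_nonneg _))) ht.1)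
  have hg : ∀ s : unitInterval, gradx ψ (t * s, u s) = p s := fun s => by
    have := hfz s s.2
    rw [← hq s, ← hy s]
    exact sub_eq_zero.1 this
  have key := intL_eq_sub (f := t • (nem unitInterval kin contDiff_kin.continuous p -
      nem unitInterval W hW.continuous (embL E (t, u)))) (Φ := fun s => ψ (t * s, y s))
    (fun s => by
      have h1 := ((hψ.differentiable (by simp) (t * s, y s)).hasFDerivAt).comp_hasDerivAt (s : ℝ)
        (hcurve s)
      refine h1.congr_deriv ?_
      have h2 := heik _ (hts s) (u s)
      rw [hg] at h2
      have h3 : kin (p s) = 1 / 2 * inner ℝ (p s) (p s) := by rw [real_inner_self_eq_norm_sq]; rfl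
      rw [fderiv_apply_prod, hy, hg, inner_smul_right, ContinuousMap.smul_apply,
        ContinuousMap.sub_apply, nem_apply, nem_apply, embL_apply, smul_eq_mul]
      linear_combination t * h2 - 2 * t * h3)
  have e1 : y 1 = x := (hy 1).trans h.pos_one
  have e2 : y 0 = u 0 := hy 0
  rw [map_smul, map_sub, smul_eq_mul] at key
  rw [key, mul_one, mul_zero, e1, e2, hψ0]
  ring

end Uniqueness

/-! ### Well-posedness -/

section Solution

open InnerProductSpace

theorem unifBdd_fderiv_clm {ι E F G : Type} [NormedAddCommGroup E] [NormedSpace ℝ E]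
    [NormedAddCommGroup F] [NormedSpace ℝ F] [NormedAddCommGroup G] [NormedSpace ℝ G] {n : ℕ}
    {f : ι → E → F} (L : F →L[ℝ] G) (hf : ∀ i, ContDiff ℝ (⊤ : ℕ∞) (f i))
    (h : UnifBdd n (fun i => fderiv ℝ (f i))) :
    UnifBdd n (fun i => fderiv ℝ (fun x => L (f i x))) := by
  have h1 := UnifBdd.clm (ContinuousLinearMap.compL ℝ E F G L) (fun i => contDiff_fderiv (hf i)) h
  convert h1 using 2 with i
  exact funext fun x =>
    (L.hasFDerivAt.comp x ((hf i).differentiable (by simp) x).hasFDerivAt).fderiv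

variable {E : Type} [NormedAddCommGroup E] [InnerProductSpace ℝ E] [CompleteSpace E]

/-- Bounds on the derivatives of order `≥ 2` of a function are bounds on the derivatives of order
`≥ 1` of its gradient. -/
theorem unifBdd_fderiv_riesz {ι : Type} {n : ℕ} {f : ι → E → ℝ}
    (hf : ∀ i, ContDiff ℝ (⊤ : ℕ∞) (f i))
    (h : ∀ k ≤ n, ∃ C : ℝ, ∀ i x, ‖iteratedFDeriv ℝ (k + 2) (f i) x‖ ≤ C) :
    UnifBdd n (fun i => fderiv ℝ (fun x => riesz E (fderiv ℝ (f i) x))) := by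
  refine unifBdd_fderiv_clm (riesz E) (fun i => contDiff_fderiv (hf i)) fun k hk => ?_
  obtain ⟨C, hC⟩ := h k hk
  refine ⟨C, fun i x => ?_⟩
  rw [norm_iteratedFDeriv_fderiv, norm_iteratedFDeriv_fderiv]
  exact hC i x

theorem unifBdd_dx_gradx {S : Set ℝ} {n : ℕ} {W : ℝ × E → ℝ} (hW : ContDiff ℝ (⊤ : ℕ∞) W)
    (h : ∀ k ≤ n, ∃ C : ℝ, ∀ t ∈ S, ∀ x, ‖iteratedFDeriv ℝ (k + 2) (fun x => W (t, x)) x‖ ≤ C) :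
    UnifBdd n (fun (t : S) x => dx (gradx W) (t, x)) := by
  have h1 := unifBdd_fderiv_riesz (ι := S) (n := n) (f := fun t x => W (t, x))
    (fun t => contDiff_slice hW t) (fun k hk => by
      obtain ⟨C, hC⟩ := h k hk
      exact ⟨C, fun t x => hC t t.2 x⟩)
  convert h1 using 2 with t
  rw [← fderiv_slice (contDiff_gradx hW), fderiv_slice hW]
  rfl

/-- Local well-posedness of the eikonal equation, with time and space bundled into one variable. -/
theorem exists_solution {W : ℝ × E → ℝ} {φ₀ : E → ℝ} (hW : ContDiff ℝ (⊤ : ℕ∞) W)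
    (hφ : ContDiff ℝ (⊤ : ℕ∞) φ₀)
    (hWb : ∀ n : ℕ, 2 ≤ n → ∃ C : ℝ, ∀ t ∈ Icc (-1 : ℝ) 1, ∀ x,
      ‖iteratedFDeriv ℝ n (fun x => W (t, x)) x‖ ≤ C)
    (hφb : ∀ n : ℕ, 2 ≤ n → ∃ C : ℝ, ∀ x, ‖iteratedFDeriv ℝ n φ₀ x‖ ≤ C) :
    ∃ T : ℝ, 0 < T ∧ ∃ Φ : ℝ × E → ℝ, ContDiff ℝ (⊤ : ℕ∞) Φ ∧
      (∀ t ∈ Icc (0 : ℝ) T, ∀ x,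
        fderiv ℝ Φ (t, x) (1, 0) + kin (gradx Φ (t, x)) + W (t, x) = 0) ∧
      (∀ x, Φ (0, x) = φ₀ x) ∧
      (∀ n : ℕ, 2 ≤ n → ∃ C : ℝ, ∀ t ∈ Icc (0 : ℝ) T, ∀ x,
        ‖iteratedFDeriv ℝ n (fun x => Φ (t, x)) x‖ ≤ C) ∧
      (∀ ψ : ℝ × E → ℝ, ContDiff ℝ (⊤ : ℕ∞) ψ →
        (∀ t ∈ Icc (0 : ℝ) T, ∀ x,
          fderiv ℝ ψ (t, x) (1, 0) + kin (gradx ψ (t, x)) + W (t, x) = 0) →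
        (∀ x, ψ (0, x) = φ₀ x) →
        (∃ C : ℝ, ∀ t ∈ Icc (0 : ℝ) T, ∀ x, ‖iteratedFDeriv ℝ 2 (fun x => ψ (t, x)) x‖ ≤ C) →
        ∀ t ∈ Icc (0 : ℝ) T, ∀ x, ψ (t, x) = Φ (t, x)) := by
  have ha := contDiff_gradx hW
  have hb : ContDiff ℝ (⊤ : ℕ∞) (fun x => riesz E (fderiv ℝ φ₀ x)) :=
    contDiff_clm (riesz E) (contDiff_fderiv hφ)
  obtain ⟨T, hT, U, hU, hUF, hUb⟩ := exists_characteristics ha hb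
    (fun n => unifBdd_dx_gradx hW fun k _ => hWb (k + 2) (by omega))
    (fun n => unifBdd_fderiv_riesz (f := fun _ => φ₀) (fun _ => hφ) fun k _ => by
      obtain ⟨C, hC⟩ := hφb (k + 2) (by omega)
      exact ⟨C, fun _ => hC⟩)
  let P : ℝ × E → C(unitInterval, E) := fun z =>
    mom (gradx W) (fun x => riesz E (fderiv ℝ φ₀ x)) ha.continuous (z.1, U z)
  have hP : ContDiff ℝ (⊤ : ℕ∞) P := (contDiff_mom ha hb).comp (contDiff_fst.prodMk hU)
  have hchar : ∀ z : ℝ × E, z.1 ∈ Ioo (-(2 * T)) (2 * T) →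
      IsChar W hW z.1 z.2 (riesz E (fderiv ℝ φ₀ (U z 0))) (U z) (P z) := fun z hz =>
    ⟨hUF z.1 hz z.2, by rw [sub_eq_add_neg, ← neg_smul]; rfl⟩
  have hI : ∀ t ∈ Icc 0 T, t ∈ Ioo (-(2 * T)) (2 * T) := fun t ht =>
    ⟨by linarith [ht.1], by linarith [ht.2]⟩
  have hd : ∀ t ∈ Icc 0 T, ∀ (x : E) (h : ℝ × E), fderiv ℝ (phase φ₀ hW U P) (t, x) h =
      inner ℝ (P (t, x) 1) h.2 - h.1 * (kin (P (t, x) 1) + W (t, x)) := fun t ht x h =>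
    fderiv_phase_of_isChar hφ hW hU hP (t, x)
      ((continuousAt_fst.eventually_mem (isOpen_Ioo.mem_nhds (hI t ht))).mono hchar) h
  have hs := contDiff_phase hφ hW hU hP
  have hdx : ∀ t ∈ Icc 0 T, ∀ x, dx (phase φ₀ hW U P) (t, x) = innerSL ℝ (P (t, x) 1) := by
    intro t ht x
    ext v
    refine (hd t ht x (0, v)).trans ?_
    simp
  refine ⟨T, hT, phase φ₀ hW U P, hs, fun t ht x => ?_, fun x => ?_, fun n hn => ?_, ?_⟩
  · have h1 : gradx (phase φ₀ hW U P) (t, x) = P (t, x) 1 := by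
      refine ext_inner_right ℝ fun v => ?_
      rw [gradx, inner_riesz, hdx t ht x, innerSL_apply_apply]
    rw [h1, hd t ht x]
    simp
  · have h1 : U (0, x) = constL E x := by
      rw [hUF 0 (hI 0 ⟨le_rfl, hT.le⟩) x, zero_smul, sub_zero]
    simp [phase, h1]
  · let ev : C(unitInterval, E) →L[ℝ] E := ContinuousMap.evalCLM ℝ (1 : unitInterval)
    have h1 := unifBdd_fderiv_clm (ι := Icc (0 : ℝ) T) (f := fun t x => P (t, x))
      ((innerSL ℝ).comp ev) (fun t => contDiff_slice hP t) (hUb n)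
    obtain ⟨C, hC⟩ := h1 (n - 2) (by omega)
    refine ⟨C, fun t ht x => ?_⟩
    obtain ⟨m, rfl⟩ := Nat.exists_eq_add_of_le' hn
    rw [← norm_iteratedFDeriv_fderiv, ← norm_iteratedFDeriv_fderiv, fderiv_slice hs,
      show (fun x => dx (phase φ₀ hW U P) (t, x)) = _ from funext (hdx t ht)]
    exact hC ⟨t, ht⟩ x
  · rintro ψ hψ heik hψ0 ⟨C, hC⟩ t ht x
    obtain ⟨D, -, hD⟩ := (unifBdd_dx_gradx (S := Icc (0 : ℝ) T) (n := 0) hψ (fun k hk => by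
      obtain rfl : k = 0 := by omega
      exact ⟨C, hC⟩)).bound
    exact (hchar (t, x) (hI t ht)).eq_action hψ heik hψ0 (fun τ hτ y => hD ⟨τ, hτ⟩ y) ht

end Solution

/-! ### Comparison with partial derivatives of curried functions -/

theorem deriv_slice {E : Type} [NormedAddCommGroup E] [NormedSpace ℝ E] {Ψ : ℝ × E → ℝ}
    (hΨ : ContDiff ℝ (⊤ : ℕ∞) Ψ) (t : ℝ) (x : E) :
    deriv (fun s => Ψ (s, x)) t = fderiv ℝ Ψ (t, x) (1, 0) :=
  ((hΨ.differentiable (by simp) (t, x)).hasFDerivAt.comp_hasDerivAt t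
    ((hasDerivAt_id t).prodMk (hasDerivAt_const t x))).deriv

theorem gradient_slice {E : Type} [NormedAddCommGroup E] [InnerProductSpace ℝ E] [CompleteSpace E]
    {Ψ : ℝ × E → ℝ} (hΨ : ContDiff ℝ (⊤ : ℕ∞) Ψ) (t : ℝ) (x : E) :
    gradient (fun x => Ψ (t, x)) x = gradx Ψ (t, x) := by
  rw [gradient, fderiv_slice hΨ]
  rfl

theorem eikonal_slice {E : Type} [NormedAddCommGroup E] [InnerProductSpace ℝ E] [CompleteSpace E]
    {ψ : ℝ → E → ℝ} (hψ : ContDiff ℝ (⊤ : ℕ∞) (fun p : ℝ × E => ψ p.1 p.2)) (t : ℝ) (x : E) :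
    deriv (fun s => ψ s x) t + (1 / 2) * ‖gradient (ψ t) x‖ ^ 2 =
      fderiv ℝ (fun p : ℝ × E => ψ p.1 p.2) (t, x) (1, 0) +
        kin (gradx (fun p : ℝ × E => ψ p.1 p.2) (t, x)) := by
  rw [← deriv_slice hψ, ← gradient_slice hψ, kin]

end Eikonal

/-- under Assumption (A) (smooth subquadratic potential and initial
phase), the eikonal equation `∂_t φ + |∇φ|²/2 + V = 0`, `φ(0,·) = φ₀`, has a smooth
solution on `[0,T] × ℝ^d` for some `T > 0`, with bounded spatial derivatives of order
`≥ 2`, and this solution is unique in the subquadratic class. -/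
theorem eikonal_equation_local_wellposedness
    (d : ℕ) (hd : 1 ≤ d)
    (V : ℝ → Ed d → ℝ)
    (hV_smooth : ContDiff ℝ (⊤ : ℕ∞) (fun p : ℝ × Ed d => V p.1 p.2))
    (hV_sub : ∀ T' : ℝ, 0 < T' → ∀ n : ℕ, 2 ≤ n → ∃ C : ℝ,
      ∀ t ∈ Set.Icc (-T') T', ∀ x : Ed d, ‖iteratedFDeriv ℝ n (V t) x‖ ≤ C)
    (φ₀ : Ed d → ℝ)
    (hφ₀_smooth : ContDiff ℝ (⊤ : ℕ∞) φ₀)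
    (hφ₀_sub : ∀ n : ℕ, 2 ≤ n → ∃ C : ℝ, ∀ x : Ed d, ‖iteratedFDeriv ℝ n φ₀ x‖ ≤ C) :
    ∃ T : ℝ, 0 < T ∧ ∃ φ : ℝ → Ed d → ℝ,
      ContDiff ℝ (⊤ : ℕ∞) (fun p : ℝ × Ed d => φ p.1 p.2) ∧
      (∀ t ∈ Set.Icc (0 : ℝ) T, ∀ x : Ed d,
        deriv (fun s => φ s x) t + (1 / 2) * ‖gradient (φ t) x‖ ^ 2 + V t x = 0) ∧
      (∀ x, φ 0 x = φ₀ x) ∧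
      (∀ n : ℕ, 2 ≤ n → ∃ C : ℝ,
        ∀ t ∈ Set.Icc (0 : ℝ) T, ∀ x : Ed d, ‖iteratedFDeriv ℝ n (φ t) x‖ ≤ C) ∧
      (∀ ψ : ℝ → Ed d → ℝ,
        ContDiff ℝ (⊤ : ℕ∞) (fun p : ℝ × Ed d => ψ p.1 p.2) →
        (∀ t ∈ Set.Icc (0 : ℝ) T, ∀ x : Ed d,
          deriv (fun s => ψ s x) t + (1 / 2) * ‖gradient (ψ t) x‖ ^ 2 + V t x = 0) →
        (∀ x, ψ 0 x = φ₀ x) →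
        (∃ C : ℝ, ∀ t ∈ Set.Icc (0 : ℝ) T, ∀ x : Ed d, ‖iteratedFDeriv ℝ 2 (ψ t) x‖ ≤ C) →
        ∀ t ∈ Set.Icc (0 : ℝ) T, ∀ x : Ed d, ψ t x = φ t x) := by
  obtain ⟨T, hT, Φ, hΦ, heik, h0, hb, huniq⟩ :=
    Eikonal.exists_solution hV_smooth hφ₀_smooth (hV_sub 1 one_pos) hφ₀_sub
  refine ⟨T, hT, fun t x => Φ (t, x), hΦ, fun t ht x => ?_, h0, hb, ?_⟩
  · rw [Eikonal.eikonal_slice (ψ := fun t x => Φ (t, x)) hΦ]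
    exact heik t ht x
  · intro ψ hψ hψe hψ0 hψb
    refine huniq (fun p => ψ p.1 p.2) hψ (fun t ht x => ?_) hψ0 hψb
    rw [← Eikonal.eikonal_slice hψ]
    exact hψe t ht x
end
end

section
/- Let d ≥ 1 and let V, φ₀ satisfy Assumption (A). For each y ∈ ℝ^d, the Hamiltonian system ∂_t x(t,y) = ξ(t,y), ∂_t ξ(t,y) = −∇_x V(t, x(t,y)), with x(0,y) = y and ξ(0,y) = ∇φ₀(y), has a unique solution defined for all t ≥ 0, depending smoothly on y. Moreover there exist T > 0 and c > 0 such that for every t ∈ [0,T] the map y ↦ x(t,y) is a C^∞ diffeomorphism of ℝ^d onto ℝ^d, and the Jacobian determinant J_t(y) := det(∂x(t,y)/∂y) satisfies J_t(y) ≥ c for all y ∈ ℝ^d and t ∈ [0,T]. -/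
/-!
The Hamiltonian system is `Z' = F (t, Z)` on phase space, for `Z = (x, ξ)` and
`F (t, (x, ξ)) = (ξ, -∇V(t, x))`. Bounded second derivatives of `V` make `F (t, ·)` Lipschitz,
uniformly for `t` in a bounded interval.

**Global smooth flow** (`HamFlow.exists_smooth_flow`). The solution with initial value `z` on the
time interval between `0` and `t`, rescaled to `[0,1]`, is a zero `γ ∈ C([0,1], E)` of
`Φ ((t, z), γ) = γ - z - t ∫₀ F (t u, γ u) du`.
* Such a `γ` exists and is unique, with no smallness condition: an exponential weight turns every
  Volterra equation with Lipschitz nonlinearity into a contraction (`HamFlow.volterra`).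
* `Φ` is smooth, because the superposition operator `γ ↦ F ∘ γ` on spaces of continuous maps is
  smooth: its derivative is again a superposition operator, so induction on the order of
  differentiability applies (`HamFlow.contDiff_comp_nat`).
* `∂Φ/∂γ` is invertible, since inverting it means solving a linear Volterra equation.

The implicit function theorem, applied at every `(t, z)`, and uniqueness of `γ` give smoothness of
`γ` in `(t, z)`, hence of the flow. Uniqueness of solutions is Grönwall's inequality.

**Diffeomorphism for short times.** By Grönwall's inequality and the Lipschitz continuity of `∇φ₀`,
the velocities of two trajectories differ by at most a constant times the distance of their
starting points `y`, `y'`. Integrating in time, `y ↦ x(t, y) - y` is Lipschitz with constant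
`O(t)`, uniformly in `y` (`HamFlow.displacement_le`). For small `t` this is less than `1`, so that
`x(t, ·)` is a homeomorphism, and the differential of `x(t, ·)` is uniformly close to the identity,
so that its determinant is at least `1/2`. The inverse function theorem then makes the inverse
smooth (`HamFlow.exists_smooth_inverse`).
-/

open MeasureTheory Filter Complex Set
open scoped ENNReal

noncomputable section

namespace HamFlow

open scoped unitInterval NNReal Topology ContDiff

/-! ### Superposition operators on spaces of continuous maps -/

section Nemytskii

variable {S : Type*} [TopologicalSpace S] [CompactSpace S]

/-- Pointwise application `(A, h) ↦ (s ↦ A s (h s))` of a continuous family of operators to a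
continuous map, as a bounded bilinear map. -/
def pointwiseApply (S : Type*) [TopologicalSpace S] [CompactSpace S]
    (G H : Type*) [NormedAddCommGroup G] [NormedSpace ℝ G]
    [NormedAddCommGroup H] [NormedSpace ℝ H] :
    C(S, G →L[ℝ] H) →L[ℝ] C(S, G) →L[ℝ] C(S, H) :=
  LinearMap.mkContinuous₂
    (LinearMap.mk₂ ℝ (fun (A : C(S, G →L[ℝ] H)) (h : C(S, G)) => (⟨fun s => A s (h s), by fun_prop⟩ : C(S, H)))
      (by intros; ext; simp) (by intros; ext; simp) (by intros; ext; simp) (by intros; ext; simp))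
    1 (by
      intro A h
      rw [ContinuousMap.norm_le _ (by positivity)]
      intro s
      rw [one_mul]
      exact (A s).le_of_opNorm_le_of_le (A.norm_coe_le_norm s) (h.norm_coe_le_norm s))

@[simp] lemma pointwiseApply_apply {G H : Type*} [NormedAddCommGroup G] [NormedSpace ℝ G]
    [NormedAddCommGroup H] [NormedSpace ℝ H] (A : C(S, G →L[ℝ] H)) (h : C(S, G)) (s : S) :
    pointwiseApply S G H A h s = A s (h s) := rfl

/-- The superposition operator of a `C¹` map is differentiable for the sup norm. The mean value
inequality on each segment `[γ s, γ s + h s]` reduces the remainder estimate to the continuity of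
the superposition operator of the derivative, which holds because `S` is compact. -/
lemma hasFDerivAt_comp {G H : Type*} [NormedAddCommGroup G] [NormedSpace ℝ G]
    [NormedAddCommGroup H] [NormedSpace ℝ H] (F : C(G, H)) (F' : C(G, G →L[ℝ] H))
    (hF : ∀ x, HasFDerivAt F (F' x) x) (γ : C(S, G)) :
    HasFDerivAt (fun η : C(S, G) => F.comp η) (pointwiseApply S G H (F'.comp γ)) γ := by
  rw [hasFDerivAt_iff_isLittleO_nhds_zero, Asymptotics.isLittleO_iff]
  intro ε hε
  have hcont : Continuous fun η : C(S, G) => F'.comp η := F'.continuous_postcomp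
  obtain ⟨δ, hδ, hball⟩ := (Metric.continuous_iff (α := C(S, G)) (β := C(S, G →L[ℝ] H))).1
    hcont γ ε hε
  filter_upwards [Metric.ball_mem_nhds (0 : C(S, G)) hδ] with h hh
  rw [mem_ball_zero_iff] at hh
  rw [ContinuousMap.norm_le _ (by positivity)]
  intro s
  have key := (convex_segment (γ s) (γ s + h s)).norm_image_sub_le_of_norm_hasFDerivWithin_le'
    (f := F) (f' := fun x => F' x) (φ := F' (γ s)) (C := ε)
    (fun x _ => (hF x).hasFDerivWithinAt) ?_ (left_mem_segment ℝ _ _) (right_mem_segment ℝ _ _)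
  · simp only [add_sub_cancel_left] at key
    refine key.trans ?_
    gcongr
    exact h.norm_coe_le_norm s
  · intro x hx
    rw [segment_eq_image'] at hx
    obtain ⟨θ, ⟨hθ0, hθ1⟩, rfl⟩ := hx
    have h1 : dist (γ + θ • h) γ < δ := by
      rw [dist_eq_norm, add_sub_cancel_left, norm_smul, Real.norm_of_nonneg hθ0]
      refine lt_of_le_of_lt ?_ hh
      exact mul_le_of_le_one_left (norm_nonneg _) hθ1
    have h2 := (ContinuousMap.dist_apply_le_dist (f := F'.comp (γ + θ • h))
      (g := F'.comp γ) s).trans (hball _ h1).le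
    simpa [dist_eq_norm] using h2

/-- The superposition operator of a `Cⁿ` map is `Cⁿ`: its derivative is again a superposition
operator, followed by a bounded linear map, so that induction on `n` applies. -/
lemma contDiff_comp_nat.{u} (n : ℕ) : ∀ {G H : Type u} [NormedAddCommGroup G] [NormedSpace ℝ G]
    [NormedAddCommGroup H] [NormedSpace ℝ H] (F : C(G, H)), ContDiff ℝ n F →
    ContDiff ℝ n (fun η : C(S, G) => F.comp η) := by
  induction n with
  | zero =>
    intro G H _ _ _ _ F _
    exact contDiff_zero.2 F.continuous_postcomp
  | succ n ih =>
    intro G H _ _ _ _ F hF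
    have hF1 : ContDiff ℝ ((n : WithTop ℕ∞) + 1) F := by exact_mod_cast hF
    obtain ⟨hd, -, hF'⟩ := contDiff_succ_iff_fderiv.1 hF1
    let F' : C(G, G →L[ℝ] H) := ⟨fderiv ℝ F, hF'.continuous⟩
    have hder := fun γ : C(S, G) => hasFDerivAt_comp F F' (fun x => (hd x).hasFDerivAt) γ
    have : ContDiff ℝ ((n : WithTop ℕ∞) + 1) (fun η : C(S, G) => F.comp η) := by
      rw [contDiff_succ_iff_fderiv]
      refine ⟨fun γ => (hder γ).differentiableAt, by simp, ?_⟩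
      have : fderiv ℝ (fun η : C(S, G) => F.comp η)
          = fun γ => pointwiseApply S G H (F'.comp γ) := funext fun γ => (hder γ).fderiv
      rw [this]
      exact (pointwiseApply S G H).contDiff.comp (ih F' hF')
    exact_mod_cast this

lemma contDiff_comp.{u} {G H : Type u} [NormedAddCommGroup G] [NormedSpace ℝ G]
    [NormedAddCommGroup H] [NormedSpace ℝ H] (F : C(G, H)) (hF : ContDiff ℝ ∞ F) :
    ContDiff ℝ ∞ (fun η : C(S, G) => F.comp η) :=
  contDiff_infty.2 fun n => contDiff_comp_nat n F (hF.of_le (by exact_mod_cast le_top))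

end Nemytskii

/-! ### Volterra equations -/

section Volterra

variable {E : Type*} [NormedAddCommGroup E] [NormedSpace ℝ E]

/-- Integration `f ↦ (s ↦ ∫₀ˢ f)` on `C([0,1], E)`, as a bounded linear operator. The integrand is
extended to `ℝ` by its boundary values; only its values on `[0,1]` matter. -/
def primitive (E : Type*) [NormedAddCommGroup E] [NormedSpace ℝ E] : C(I, E) →L[ℝ] C(I, E) :=
  LinearMap.mkContinuous
    { toFun := fun f => ⟨fun s => ∫ u in (0 : ℝ)..s, f (projIcc 0 1 zero_le_one u),
        (intervalIntegral.continuous_primitive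
          (fun a b => (f.continuous.comp continuous_projIcc).intervalIntegrable a b) 0).comp
          continuous_subtype_val⟩
      map_add' := fun f g => by
        ext s
        simp only [ContinuousMap.coe_mk, ContinuousMap.add_apply]
        exact intervalIntegral.integral_add
          ((f.continuous.comp continuous_projIcc).intervalIntegrable _ _)
          ((g.continuous.comp continuous_projIcc).intervalIntegrable _ _)
      map_smul' := fun c f => by
        ext s
        simp }
    1 (by
      intro f
      rw [ContinuousMap.norm_le _ (by positivity)]
      intro s
      have h := intervalIntegral.norm_integral_le_of_norm_le_const (a := 0) (b := (s : ℝ))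
        (f := fun u => f (projIcc 0 1 zero_le_one u)) (C := ‖f‖)
        (fun u _ => f.norm_coe_le_norm _)
      have hs : |(s : ℝ) - 0| ≤ 1 := by rw [sub_zero, abs_of_nonneg s.2.1]; exact s.2.2
      calc _ ≤ ‖f‖ * |(s : ℝ) - 0| := h
        _ ≤ ‖f‖ * 1 := by gcongr
        _ = 1 * ‖f‖ := by ring)

lemma primitive_apply (f : C(I, E)) (s : I) :
    primitive E f s = ∫ u in (0 : ℝ)..s, f (projIcc 0 1 zero_le_one u) := rfl

/-- Unique solvability of `γ = g + ∫₀ N γ` for a superposition-type operator `N` with pointwise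
Lipschitz constant `K`. In terms of `u s = exp (-λ s) γ s` with `λ = 2 K + 1` the
equation is a fixed point problem for a contraction of ratio `1/2`. -/
lemma volterra [CompleteSpace E] (N : C(I, E) → C(I, E)) (K : ℝ) (hK : 0 ≤ K)
    (hN : ∀ γ η s, ‖N γ s - N η s‖ ≤ K * ‖γ s - η s‖) (g : C(I, E)) :
    ∃! γ : C(I, E), γ = g + primitive E (N γ) := by
  set l : ℝ := 2 * K + 1 with hl
  have hl0 : 0 < l := by positivity
  let w : C(I, ℝ) := ⟨fun s => Real.exp (l * s), by fun_prop⟩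
  let w' : C(I, ℝ) := ⟨fun s => Real.exp (-(l * s)), by fun_prop⟩
  have hww' : ∀ s, w s * w' s = 1 := fun s => by
    simp [w, w', ← Real.exp_add]
  let Q : C(I, E) → C(I, E) := fun u => w' • (g + primitive E (N (w • u)))
  have hQ : ContractingWith (1 / 2) Q := by
    refine ⟨by rw [div_lt_one] <;> norm_num, LipschitzWith.of_dist_le_mul fun u v => ?_⟩
    rw [dist_eq_norm, dist_eq_norm, ContinuousMap.norm_le _ (by positivity)]
    intro s
    have hs0 : (0 : ℝ) ≤ s := s.2.1
    have e1 : (Q u - Q v) s = w' s • primitive E (N (w • u) - N (w • v)) s := by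
      simp only [Q, ContinuousMap.sub_apply, map_sub, ContinuousMap.smul_apply',
        ContinuousMap.add_apply, ← smul_sub]
      congr 1
      abel
    have e2 : ‖primitive E (N (w • u) - N (w • v)) s‖
        ≤ ∫ x in (0 : ℝ)..s, K * ‖u - v‖ * Real.exp (l * x) := by
      rw [primitive_apply]
      refine intervalIntegral.norm_integral_le_of_norm_le hs0 (ae_of_all _ fun x hx => ?_)
        (Continuous.intervalIntegrable (by fun_prop) _ _)
      have hx' : x ∈ Icc (0 : ℝ) 1 := ⟨hx.1.le, hx.2.trans s.2.2⟩
      rw [projIcc_of_mem _ hx', ContinuousMap.sub_apply]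
      refine (hN _ _ _).trans ?_
      have e3 : (w • u) ⟨x, hx'⟩ - (w • v) ⟨x, hx'⟩ = Real.exp (l * x) • ((u - v) ⟨x, hx'⟩) := by
        simp [w, smul_sub]
      rw [e3, norm_smul, Real.norm_of_nonneg (Real.exp_pos _).le]
      have := (u - v).norm_coe_le_norm ⟨x, hx'⟩
      calc K * (Real.exp (l * x) * ‖(u - v) ⟨x, hx'⟩‖)
          ≤ K * (Real.exp (l * x) * ‖u - v‖) := by gcongr
        _ = _ := by ring
    have e4 : ∫ x in (0 : ℝ)..s, K * ‖u - v‖ * Real.exp (l * x)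
        = K * ‖u - v‖ * ((Real.exp (l * s) - 1) / l) := by
      rw [intervalIntegral.integral_const_mul,
        intervalIntegral.integral_comp_mul_left (fun x => Real.exp x) hl0.ne']
      simp
      left; ring
    rw [e1, norm_smul, Real.norm_of_nonneg (show 0 ≤ w' s from (Real.exp_pos _).le)]
    have e5 : w' s * (Real.exp (l * s) - 1) ≤ 1 := by
      have h1 : Real.exp (l * s) * w' s = 1 := hww' s
      have h2 : 0 < w' s := Real.exp_pos _
      nlinarith
    calc w' s * ‖primitive E (N (w • u) - N (w • v)) s‖
        ≤ w' s * (K * ‖u - v‖ * ((Real.exp (l * s) - 1) / l)) := by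
          rw [← e4]
          exact mul_le_mul_of_nonneg_left e2 (Real.exp_pos _).le
      _ = (K / l) * (w' s * (Real.exp (l * s) - 1)) * ‖u - v‖ := by ring
      _ ≤ (1 / 2) * 1 * ‖u - v‖ := by
          have h2 : 0 < w' s := Real.exp_pos _
          have h3 : (1 : ℝ) ≤ Real.exp (l * s) := Real.one_le_exp (by positivity)
          have h4 : K / l ≤ 1 / 2 := by rw [div_le_div_iff₀ hl0 two_pos]; linarith
          exact mul_le_mul_of_nonneg_right
            (mul_le_mul h4 e5 (mul_nonneg h2.le (by linarith)) (by norm_num)) (norm_nonneg _)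
      _ = _ := by simp
  have hw1 : ∀ u : C(I, E), w • (w' • u) = u := fun u => by
    ext s; simp [smul_smul, hww']
  have hw2 : ∀ u : C(I, E), w' • (w • u) = u := fun u => by
    ext s; simp [smul_smul, mul_comm (w' s), hww']
  refine ⟨w • hQ.fixedPoint Q, ?_, fun γ hγ => ?_⟩
  · have := hQ.fixedPoint_isFixedPt (f := Q)
    calc w • hQ.fixedPoint Q = w • Q (hQ.fixedPoint Q) := by rw [this]
      _ = _ := hw1 _
  · have : Function.IsFixedPt Q (w' • γ) := by
      change w' • (g + primitive E (N (w • (w' • γ)))) = w' • γ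
      rw [hw1, ← hγ]
    rw [← hQ.fixedPoint_unique this, hw1]

end Volterra

/-! ### Global smooth flows -/

section Flow

variable {E : Type*} [NormedAddCommGroup E] [NormedSpace ℝ E]

/-- The space-time path `s ↦ (t s, γ s)`, written so that it is visibly linear in `(t, γ)`. -/
def path (t : ℝ) (γ : C(I, E)) : C(I, ℝ × E) :=
  t • (⟨fun s => ((s : ℝ), 0), by fun_prop⟩ : C(I, ℝ × E)) +
    (ContinuousLinearMap.inr ℝ ℝ E).compLeftContinuous ℝ I γ

lemma path_apply (t : ℝ) (γ : C(I, E)) (s : I) : path t γ s = (t * s, γ s) := by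
  simp [path]

/-- `volterraMap F ((t, z), γ) = γ - z - t ∫₀ F (t u, γ u) du`, whose zeros are the solutions, with
initial value `z`, of `Z' = F (·, Z)` on the interval between `0` and `t`, rescaled to `[0,1]`. -/
def volterraMap (F : C(ℝ × E, E)) (u : (ℝ × E) × C(I, E)) : C(I, E) :=
  u.2 - ContinuousMap.const I u.1.2 - u.1.1 • primitive E (F.comp (path u.1.1 u.2))

lemma volterraMap_eq_zero_iff (F : C(ℝ × E, E)) (t : ℝ) (z : E) (γ : C(I, E)) :
    volterraMap F ((t, z), γ) = 0 ↔ ∀ s : I, γ s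
      = z + t • ∫ u in (0 : ℝ)..s, F (t * u, γ (projIcc 0 1 zero_le_one u)) := by
  rw [volterraMap, sub_sub, sub_eq_zero, ContinuousMap.ext_iff]
  refine forall_congr' fun s => ?_
  have : primitive E (F.comp (path t γ)) s
      = ∫ u in (0 : ℝ)..s, F (t * u, γ (projIcc 0 1 zero_le_one u)) := by
    rw [primitive_apply]
    refine intervalIntegral.integral_congr fun u hu => ?_
    rw [uIcc_of_le s.2.1] at hu
    have hu' : u ∈ Icc (0 : ℝ) 1 := ⟨hu.1, hu.2.trans s.2.2⟩
    simp only [projIcc_of_mem _ hu', ContinuousMap.comp_apply, path_apply]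
  rw [← this]
  rfl

lemma contDiff_const : ContDiff ℝ ∞ (fun z : E => ContinuousMap.const I z) :=
  (LinearMap.mkContinuous
    ({ toFun := fun z => ContinuousMap.const I z
       map_add' := fun _ _ => rfl
       map_smul' := fun _ _ => rfl } : E →ₗ[ℝ] C(I, E)) 1 (by
      intro z
      rw [ContinuousMap.norm_le _ (by positivity)]
      intro s
      exact (one_mul ‖z‖).ge)).contDiff

lemma contDiff_volterraMap (F : C(ℝ × E, E)) (hF : ContDiff ℝ ∞ F) :
    ContDiff ℝ ∞ (volterraMap F) := by
  have h1 : ContDiff ℝ ∞ (fun u : (ℝ × E) × C(I, E) => path u.1.1 u.2) := by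
    unfold path
    exact (contDiff_fst.fst.smul _root_.contDiff_const).add
      (((ContinuousLinearMap.inr ℝ ℝ E).compLeftContinuous ℝ I).contDiff.comp contDiff_snd)
  exact (contDiff_snd.sub (contDiff_const.comp contDiff_fst.snd)).sub
    (contDiff_fst.fst.smul ((primitive E).contDiff.comp ((contDiff_comp F hF).comp h1)))

/-- The hypothesis of the implicit function theorem: the partial derivative of `volterraMap F` in
`γ` is `h ↦ h - t ∫₀ ∂F h`, and inverting it is a linear Volterra equation. -/
lemma isInvertible_volterraMap [CompleteSpace E] (F : C(ℝ × E, E)) (hF : ContDiff ℝ ∞ F)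
    (u : (ℝ × E) × C(I, E)) :
    (fderiv ℝ (volterraMap F) u ∘L .inr ℝ (ℝ × E) C(I, E)).IsInvertible := by
  obtain ⟨⟨t, z⟩, γ⟩ := u
  let F' : C(ℝ × E, ℝ × E →L[ℝ] E) := ⟨fderiv ℝ F, hF.continuous_fderiv (by simp)⟩
  let J : C(I, E) →L[ℝ] C(I, ℝ × E) := (ContinuousLinearMap.inr ℝ ℝ E).compLeftContinuous ℝ I
  let A : C(I, E) →L[ℝ] C(I, E) := pointwiseApply I (ℝ × E) E (F'.comp (path t γ)) ∘L J
  have hpath : HasFDerivAt (fun η : C(I, E) => path t η) J γ := J.hasFDerivAt.const_add _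
  have hcomp : HasFDerivAt (fun η : C(I, E) => F.comp (path t η)) A γ :=
    (hasFDerivAt_comp F F' (fun x => (hF.differentiable (by simp) x).hasFDerivAt)
      (path t γ)).comp γ hpath
  have h1 : HasFDerivAt (fun η : C(I, E) => volterraMap F ((t, z), η))
      (.id ℝ _ - t • (primitive E ∘L A)) γ :=
    ((hasFDerivAt_id γ).sub_const (ContinuousMap.const I z)).sub
      (((primitive E).hasFDerivAt.comp γ hcomp).const_smul t)
  have h2 : HasFDerivAt (fun η : C(I, E) => volterraMap F ((t, z), η))
      (fderiv ℝ (volterraMap F) ((t, z), γ) ∘L .inr ℝ (ℝ × E) C(I, E)) γ :=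
    (((contDiff_volterraMap F hF).differentiable (by simp) ((t, z), γ)).hasFDerivAt).comp γ
      (hasFDerivAt_prodMk_right (t, z) γ)
  rw [h2.unique h1]
  have hbij : ∀ g : C(I, E), ∃! h, (ContinuousLinearMap.id ℝ C(I, E) - t • (primitive E ∘L A)) h
      = g := by
    intro g
    have := volterra (fun h => t • A h) (‖t‖ * ‖F'.comp (path t γ)‖) (by positivity) ?_ g
    · convert this using 2 with h
      simp [sub_eq_iff_eq_add]
    · intro h k s
      have : (t • A h) s - (t • A k) s = t • (F' (path t γ s) (0, h s - k s)) := by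
        simp only [ContinuousMap.smul_apply, ← smul_sub]
        congr 1
        simp only [A, J, ContinuousLinearMap.comp_apply, pointwiseApply_apply,
          ContinuousMap.comp_apply]
        rw [← map_sub]
        congr 1
        ext <;> simp
      rw [this, norm_smul, mul_assoc]
      gcongr
      refine (ContinuousLinearMap.le_opNorm _ _).trans ?_
      have h1 := (F'.comp (path t γ)).norm_coe_le_norm s
      have h2 : ‖((0 : ℝ), h s - k s)‖ = ‖h s - k s‖ := by simp [Prod.norm_def]
      rw [h2]
      gcongr
      exact h1
  refine ⟨ContinuousLinearEquiv.ofBijective _ (LinearMap.ker_eq_bot.2 fun a b hab =>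
    (hbij _).unique hab rfl) (LinearMap.range_eq_top.2 fun g => (hbij g).exists), ?_⟩
  ext; rfl

/-- A smooth time-dependent vector field, Lipschitz in space uniformly on bounded time intervals,
has a smooth flow `Z`, defined for all times. Here `Z t z` is the value at `1` of the unique zero
`γ` of `volterraMap F ((t, z), ·)`; it is smooth in `(t, z)` by the implicit function theorem. -/
theorem exists_smooth_flow [CompleteSpace E] (F : ℝ × E → E) (hF : ContDiff ℝ ∞ F)
    (hLip : ∀ T : ℝ, 0 < T → ∃ K : ℝ≥0, ∀ t ∈ Icc (-T) T, LipschitzWith K (fun x => F (t, x))) :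
    ∃ Z : ℝ → E → E, ContDiff ℝ ∞ (fun p : ℝ × E => Z p.1 p.2) ∧ (∀ z, Z 0 z = z) ∧
      ∀ t z, HasDerivAt (fun s => Z s z) (F (t, Z t z)) t := by
  let Fc : C(ℝ × E, E) := ⟨F, hF.continuous⟩
  have hsol : ∀ p : ℝ × E, ∃! γ : C(I, E), volterraMap Fc (p, γ) = 0 := by
    rintro ⟨t, z⟩
    obtain ⟨K, hK⟩ := hLip (|t| + 1) (by positivity)
    have := volterra (fun γ => t • Fc.comp (path t γ)) (|t| * K) (by positivity) ?_
      (ContinuousMap.const I z)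
    · convert this using 2 with γ
      rw [volterraMap, sub_sub, sub_eq_zero, map_smul]
    · intro γ η s
      have hts : t * s ∈ Icc (-(|t| + 1)) (|t| + 1) := by
        rw [mem_Icc, ← abs_le, abs_mul, abs_of_nonneg s.2.1]
        nlinarith [abs_nonneg t, s.2.2, s.2.1]
      have := (hK _ hts).norm_sub_le (γ s) (η s)
      simp only [ContinuousMap.smul_apply, ContinuousMap.comp_apply, path_apply, ← smul_sub]
      rw [norm_smul, mul_assoc, Real.norm_eq_abs]
      gcongr
      exact this
  choose γ hγ huniq using hsol
  have hsmooth : ContDiff ℝ ∞ γ := by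
    rw [contDiff_iff_contDiffAt]
    intro p
    have hcd : ContDiffAt ℝ ∞ (volterraMap Fc) (p, γ p) := (contDiff_volterraMap Fc hF).contDiffAt
    have hinv := isInvertible_volterraMap Fc hF (p, γ p)
    refine (hcd.contDiffAt_implicitFunction (by simp) hinv).congr_of_eventuallyEq ?_
    filter_upwards [hcd.eventually_apply_implicitFunction (by simp) hinv] with q hq
    refine (huniq q _ ?_).symm
    exact hq.trans (hγ p)
  -- the integral equation in pointwise form
  have heq : ∀ t z (s : I), γ (t, z) s
      = z + t • ∫ u in (0 : ℝ)..s, F (t * u, γ (t, z) (projIcc 0 1 zero_le_one u)) := by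
    intro t z s
    exact (volterraMap_eq_zero_iff Fc t z _).1 (hγ (t, z)) s
  -- solutions for different `t` are restrictions of one another
  have hscale : ∀ t z (s : I), γ (t, z) s = γ (t * s, z) 1 := by
    intro t z s
    let η : C(I, E) := ⟨fun r => γ (t, z) (s * r), by fun_prop⟩
    have hη : η = γ (t * s, z) := by
      refine huniq _ _ ?_
      refine (volterraMap_eq_zero_iff Fc _ _ _).2 fun r => ?_
      have h1 := heq t z (s * r)
      have h2 : (s : ℝ) • ∫ v in (0 : ℝ)..r,
          F (t * (s * v), γ (t, z) (projIcc 0 1 zero_le_one (s * v))) =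
          ∫ u in (0 : ℝ)..(s * r : I), F (t * u, γ (t, z) (projIcc 0 1 zero_le_one u)) := by
        rw [intervalIntegral.smul_integral_comp_mul_left
          (fun u => F (t * u, γ (t, z) (projIcc 0 1 zero_le_one u)))]
        simp
      change γ (t, z) (s * r) = _
      rw [h1, ← h2, smul_smul]
      congr 2
      refine intervalIntegral.integral_congr fun u hu => ?_
      rw [uIcc_of_le r.2.1] at hu
      have hu' : u ∈ Icc (0 : ℝ) 1 := ⟨hu.1, hu.2.trans r.2.2⟩
      have hsu : (s : ℝ) * u ∈ Icc (0 : ℝ) 1 := ⟨mul_nonneg s.2.1 hu'.1, mul_le_one₀ s.2.2 hu'.1 hu'.2⟩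
      simp only [projIcc_of_mem _ hu', projIcc_of_mem _ hsu]
      rw [mul_assoc]
      rfl
    have := congrArg (fun f : C(I, E) => f 1) hη
    simpa [η] using this
  have hZ : ContDiff ℝ ∞ (fun p : ℝ × E => γ p 1) :=
    (ContinuousMap.evalCLM ℝ (1 : I) : C(I, E) →L[ℝ] E).contDiff.comp hsmooth
  have hint : ∀ t z, γ (t, z) 1 = z + ∫ u in (0 : ℝ)..t, F (u, γ (u, z) 1) := by
    intro t z
    have h2 := intervalIntegral.smul_integral_comp_mul_left (a := 0) (b := 1)
      (fun u => F (u, γ (u, z) 1)) t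
    rw [mul_zero, mul_one] at h2
    rw [← h2, heq t z 1]
    congr 2
    refine intervalIntegral.integral_congr fun u hu => ?_
    rw [uIcc_of_le (by simp)] at hu
    have hu' : u ∈ Icc (0 : ℝ) 1 := by simpa using hu
    simp only [projIcc_of_mem _ hu', hscale t z]
  refine ⟨fun t z => γ (t, z) 1, hZ, fun z => by simp [hint 0 z], fun t z => ?_⟩
  have hc : Continuous fun u : ℝ => F (u, γ (u, z) 1) :=
    hF.continuous.comp (continuous_id.prodMk (hZ.continuous.comp (continuous_id.prodMk
      continuous_const)))
  have := (intervalIntegral.integral_hasDerivAt_right (hc.intervalIntegrable 0 t)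
    (hc.stronglyMeasurableAtFilter _ _) hc.continuousAt).const_add z
  simpa only [← hint] using this

end Flow

/-! ### Gradients of subquadratic functions -/

section Gradient

variable {E : Type*} [NormedAddCommGroup E] [InnerProductSpace ℝ E] [CompleteSpace E]

lemma lipschitzWith_gradient {f : E → ℝ} (hf : ContDiff ℝ ∞ f) {C : ℝ}
    (hC : ∀ x, ‖iteratedFDeriv ℝ 2 f x‖ ≤ C) : LipschitzWith C.toNNReal (gradient f) := by
  have h1 : LipschitzWith C.toNNReal (fderiv ℝ f) := by
    refine lipschitzWith_of_nnnorm_fderiv_le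
      ((hf.fderiv_right (m := 1) (by norm_cast)).differentiable (by simp)) fun x => ?_
    rw [← NNReal.coe_le_coe, coe_nnnorm, ← norm_iteratedFDeriv_one, norm_iteratedFDeriv_fderiv]
    exact (hC x).trans (Real.le_coe_toNNReal C)
  have h2 := (InnerProductSpace.toDual ℝ E).symm.lipschitz.comp h1
  rw [one_mul] at h2
  exact h2

lemma contDiff_gradient {W : ℝ → E → ℝ} (hW : ContDiff ℝ ∞ (fun p : ℝ × E => W p.1 p.2)) :
    ContDiff ℝ ∞ (fun p : ℝ × E => gradient (W p.1) p.2) := by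
  have h1 : ContDiff ℝ ∞ (fun p : ℝ × E => fderiv ℝ (W p.1) p.2) := by
    refine ContDiff.fderiv (f := fun p : ℝ × E => W p.1) (n := ((⊤ : ℕ∞) : WithTop ℕ∞)) ?_ contDiff_snd
      (by simp : ((⊤ : ℕ∞) : WithTop ℕ∞) + 1 ≤ ((⊤ : ℕ∞) : WithTop ℕ∞))
    exact hW.comp (contDiff_fst.fst.prodMk contDiff_snd)
  exact (InnerProductSpace.toDual ℝ E).symm.contDiff.comp h1

end Gradient

/-! ### Smooth perturbations of the identity -/

section Diffeo

variable {E : Type*} [NormedAddCommGroup E] [NormedSpace ℝ E]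

/-- The determinant is continuous at the identity. -/
lemma exists_half_le_det (E : Type*) [NormedAddCommGroup E] [NormedSpace ℝ E]
    [FiniteDimensional ℝ E] : ∃ ε : ℝ, 0 < ε ∧ ∀ A : E →L[ℝ] E, ‖A - .id ℝ E‖ < ε →
    1 / 2 ≤ LinearMap.det (A : E →ₗ[ℝ] E) := by
  have hc : Continuous fun A : E →L[ℝ] E => A.det := ContinuousLinearMap.continuous_det
  obtain ⟨ε, hε, h⟩ := Metric.continuous_iff.1 hc (.id ℝ E) (1 / 2) (by norm_num)
  refine ⟨ε, hε, fun A hA => ?_⟩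
  have h1 := h A (by rwa [dist_eq_norm])
  have h2 : (ContinuousLinearMap.id ℝ E).det = 1 := by simp [ContinuousLinearMap.det]
  rw [h2, Real.dist_eq, abs_lt] at h1
  change _ ≤ A.det
  linarith [h1.1]

lemma norm_fderiv_sub_id_le {f : E → E} (hf : Differentiable ℝ f) {δ : ℝ≥0}
    (hδ : ∀ y y', ‖f y - f y' - (y - y')‖ ≤ δ * ‖y - y'‖) (y : E) :
    ‖fderiv ℝ f y - .id ℝ E‖ ≤ δ := by
  have h : HasFDerivAt (fun y => f y - y) (fderiv ℝ f y - .id ℝ E) y :=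
    (hf y).hasFDerivAt.sub (hasFDerivAt_id y)
  refine h.le_of_lipschitz (LipschitzWith.of_dist_le_mul fun a b => ?_)
  rw [dist_eq_norm, dist_eq_norm]
  have : f a - a - (f b - b) = f a - f b - (a - b) := by abel
  rw [this]
  exact hδ a b

/-- A smooth map that differs from the identity by a contraction, and whose differential is
everywhere nonsingular, is a diffeomorphism. -/
lemma exists_smooth_inverse [FiniteDimensional ℝ E] {f : E → E} (hf : ContDiff ℝ ∞ f)
    {δ : ℝ≥0} (hδ1 : δ < 1)
    (hδ : ∀ y y', ‖f y - f y' - (y - y')‖ ≤ δ * ‖y - y'‖)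
    (hdet : ∀ y, (fderiv ℝ f y).det ≠ 0) :
    Function.Bijective f ∧ ∃ g : E → E, ContDiff ℝ ∞ g ∧
      Function.LeftInverse g f ∧ Function.RightInverse g f := by
  have happ : ApproximatesLinearOn f ((ContinuousLinearEquiv.refl ℝ E : E ≃L[ℝ] E) : E →L[ℝ] E)
      univ δ := fun y _ y' _ => hδ y y'
  have hN : Subsingleton E ∨
      δ < ‖((ContinuousLinearEquiv.refl ℝ E).symm : E →L[ℝ] E)‖₊⁻¹ := by
    rcases subsingleton_or_nontrivial E with h | h
    · exact .inl h
    · right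
      have : ‖((ContinuousLinearEquiv.refl ℝ E).symm : E →L[ℝ] E)‖₊ = 1 := by
        rw [← NNReal.coe_inj]
        exact ContinuousLinearMap.norm_id
      rwa [this, inv_one]
  have : CompleteSpace E := FiniteDimensional.complete ℝ E
  let e : E ≃ₜ E := happ.toHomeomorph f hN
  have he : ⇑e = f := rfl
  refine ⟨he ▸ e.bijective, e.symm, ?_, e.symm_apply_apply, e.apply_symm_apply⟩
  exact e.contDiff_symm
    (f₀' := fun y => (fderiv ℝ f y).toContinuousLinearEquivOfDetNeZero (hdet y))
    (fun y => (hf.differentiable (by simp) y).hasFDerivAt) hf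

end Diffeo

/-! ### Short times -/

section ShortTime

variable {E : Type*} [NormedAddCommGroup E] [NormedSpace ℝ E]

/-- By Grönwall's inequality two trajectories of `x' = ξ`, `ξ' = -f t x` stay at a distance
comparable to their initial distance, which bounds the difference of their velocities. Hence the
difference of their displacements is `O(t)` times the initial distance. -/
lemma displacement_le {f : ℝ → E → E} {K : ℝ≥0}
    (hK : ∀ t ∈ Icc (-1 : ℝ) 1, LipschitzWith K (fun p : E × E => (p.2, -f t p.1)))
    {x ξ x' ξ' : ℝ → E} {D : ℝ}
    (hx : ∀ t, HasDerivAt x (ξ t) t) (hξ : ∀ t, HasDerivAt ξ (-f t (x t)) t)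
    (hx' : ∀ t, HasDerivAt x' (ξ' t) t) (hξ' : ∀ t, HasDerivAt ξ' (-f t (x' t)) t)
    (h0 : dist (x 0, ξ 0) (x' 0, ξ' 0) ≤ D) {t : ℝ} (ht : t ∈ Icc (0 : ℝ) 1) :
    ‖x t - x' t - (x 0 - x' 0)‖ ≤ D * Real.exp K * t := by
  have hz : ∀ t, HasDerivAt (fun s => (x s, ξ s)) (ξ t, -f t (x t)) t :=
    fun t => (hx t).prodMk (hξ t)
  have hz' : ∀ t, HasDerivAt (fun s => (x' s, ξ' s)) (ξ' t, -f t (x' t)) t :=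
    fun t => (hx' t).prodMk (hξ' t)
  have hD : 0 ≤ D := dist_nonneg.trans h0
  have hg := dist_le_of_trajectories_ODE_of_mem (v := fun t (p : E × E) => (p.2, -f t p.1))
    (s := fun _ => univ) (K := K) (a := 0) (b := 1) (δ := D)
    (fun s hs => (hK s ⟨by linarith [hs.1], hs.2.le⟩).lipschitzOnWith)
    (fun s _ => (hz s).continuousAt.continuousWithinAt)
    (fun s _ => (hz s).hasDerivWithinAt) (fun _ _ => mem_univ _)
    (fun s _ => (hz' s).continuousAt.continuousWithinAt)
    (fun s _ => (hz' s).hasDerivWithinAt) (fun _ _ => mem_univ _) h0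
  have hbound : ∀ s ∈ Ico (0 : ℝ) 1, ‖ξ s - ξ' s‖ ≤ D * Real.exp K := by
    intro s hs
    calc ‖ξ s - ξ' s‖ = dist (ξ s) (ξ' s) := (dist_eq_norm _ _).symm
      _ ≤ dist (x s, ξ s) (x' s, ξ' s) := le_max_right _ _
      _ ≤ D * Real.exp (K * (s - 0)) := hg s (Ico_subset_Icc_self hs)
      _ ≤ D * Real.exp K := by
        gcongr
        have : (0 : ℝ) ≤ K := K.2
        nlinarith [hs.1, hs.2]
  have := norm_image_sub_le_of_norm_deriv_le_segment' (f := fun s => x s - x' s)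
    (fun s _ => ((hx s).sub (hx' s)).hasDerivWithinAt) hbound t ht
  simpa using this

end ShortTime

end HamFlow

/-- under Assumption (A), the Hamiltonian system
`∂_t x = ξ`, `∂_t ξ = -∇_x V(t,x)`, `x(0,y) = y`, `ξ(0,y) = ∇φ₀(y)` has a unique
global solution for `t ≥ 0` depending smoothly on `y`; moreover for some `T > 0` and
`c > 0`, for each `t ∈ [0,T]` the map `y ↦ x(t,y)` is a smooth diffeomorphism of
`ℝ^d` with Jacobian determinant `J_t(y) ≥ c`. -/
theorem hamiltonian_flow_diffeomorphism
    (d : ℕ) (hd : 1 ≤ d)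
    (V : ℝ → Ed d → ℝ)
    (hV_smooth : ContDiff ℝ (⊤ : ℕ∞) (fun p : ℝ × Ed d => V p.1 p.2))
    (hV_sub : ∀ T' : ℝ, 0 < T' → ∀ n : ℕ, 2 ≤ n → ∃ C : ℝ,
      ∀ t ∈ Set.Icc (-T') T', ∀ x : Ed d, ‖iteratedFDeriv ℝ n (V t) x‖ ≤ C)
    (φ₀ : Ed d → ℝ)
    (hφ₀_smooth : ContDiff ℝ (⊤ : ℕ∞) φ₀)
    (hφ₀_sub : ∀ n : ℕ, 2 ≤ n → ∃ C : ℝ, ∀ x : Ed d, ‖iteratedFDeriv ℝ n φ₀ x‖ ≤ C) :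
    ∃ X Ξ : ℝ → Ed d → Ed d,
      -- joint smoothness in `(t, y)`
      ContDiff ℝ (⊤ : ℕ∞) (fun p : ℝ × Ed d => (X p.1 p.2, Ξ p.1 p.2)) ∧
      -- initial conditions
      (∀ y, X 0 y = y ∧ Ξ 0 y = gradient φ₀ y) ∧
      -- the Hamiltonian ODE for all `t ≥ 0`
      (∀ t : ℝ, 0 ≤ t → ∀ y,
        HasDerivAt (fun s => X s y) (Ξ t y) t ∧
        HasDerivAt (fun s => Ξ s y) (-gradient (V t) (X t y)) t) ∧
      -- uniqueness of the solution for `t ≥ 0`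
      (∀ X' Ξ' : ℝ → Ed d → Ed d, ∀ y,
        X' 0 y = y → Ξ' 0 y = gradient φ₀ y →
        (∀ t : ℝ, 0 ≤ t →
          HasDerivAt (fun s => X' s y) (Ξ' t y) t ∧
          HasDerivAt (fun s => Ξ' s y) (-gradient (V t) (X' t y)) t) →
        ∀ t : ℝ, 0 ≤ t → X' t y = X t y ∧ Ξ' t y = Ξ t y) ∧
      -- diffeomorphism property and Jacobian lower bound on `[0,T]`
      (∃ T : ℝ, 0 < T ∧ ∃ c : ℝ, 0 < c ∧ ∀ t ∈ Set.Icc (0 : ℝ) T,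
        Function.Bijective (X t) ∧
        (∃ g : Ed d → Ed d, ContDiff ℝ (⊤ : ℕ∞) g ∧
          Function.LeftInverse g (X t) ∧ Function.RightInverse g (X t)) ∧
        ∀ y, c ≤ LinearMap.det ((fderiv ℝ (X t) y : Ed d →L[ℝ] Ed d) : Ed d →ₗ[ℝ] Ed d)) := by
  have hG := HamFlow.contDiff_gradient hV_smooth
  have hVt : ∀ t, ContDiff ℝ (⊤ : ℕ∞) (V t) := fun t =>
    hV_smooth.comp (contDiff_const.prodMk contDiff_id)
  -- the Hamiltonian vector field and its Lipschitz constants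
  have hF : ContDiff ℝ (⊤ : ℕ∞) (fun q : ℝ × (Ed d × Ed d) => (q.2.2, -gradient (V q.1) q.2.1)) :=
    contDiff_snd.snd.prodMk (hG.comp (contDiff_fst.prodMk contDiff_snd.fst)).neg
  have hLip : ∀ T : ℝ, 0 < T → ∃ K : NNReal, ∀ t ∈ Icc (-T) T,
      LipschitzWith K (fun p : Ed d × Ed d => (p.2, -gradient (V t) p.1)) := by
    intro T hT
    obtain ⟨C, hC⟩ := hV_sub T hT 2 le_rfl
    refine ⟨max 1 C.toNNReal, fun t ht => ?_⟩
    have h1 := (HamFlow.lipschitzWith_gradient (hVt t) (hC t ht)).neg.comp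
      (LipschitzWith.prod_fst (α := Ed d) (β := Ed d))
    rw [mul_one] at h1
    exact LipschitzWith.prod_snd.prodMk h1
  have hφ : LipschitzWith (hφ₀_sub 2 le_rfl).choose.toNNReal (gradient φ₀) :=
    HamFlow.lipschitzWith_gradient hφ₀_smooth (hφ₀_sub 2 le_rfl).choose_spec
  have hφs : ContDiff ℝ (⊤ : ℕ∞) (gradient φ₀) :=
    (HamFlow.contDiff_gradient (W := fun _ => φ₀) (hφ₀_smooth.comp contDiff_snd)).comp
      (contDiff_const (c := (0 : ℝ)).prodMk contDiff_id)
  generalize (hφ₀_sub 2 le_rfl).choose.toNNReal = L at hφ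
  obtain ⟨Z, hZ, hZ0, hZd⟩ := HamFlow.exists_smooth_flow _ hF hLip
  have hY : ContDiff ℝ (⊤ : ℕ∞) (fun p : ℝ × Ed d => Z p.1 (p.2, gradient φ₀ p.2)) :=
    hZ.comp (contDiff_fst.prodMk (contDiff_snd.prodMk (hφs.comp contDiff_snd)))
  have hX : ∀ t y, HasDerivAt (fun s => (Z s (y, gradient φ₀ y)).1)
      (Z t (y, gradient φ₀ y)).2 t := fun t y => (hZd t (y, gradient φ₀ y)).fst
  have hΞ : ∀ t y, HasDerivAt (fun s => (Z s (y, gradient φ₀ y)).2)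
      (-gradient (V t) (Z t (y, gradient φ₀ y)).1) t := fun t y =>
    (hZd t (y, gradient φ₀ y)).snd
  refine ⟨fun t y => (Z t (y, gradient φ₀ y)).1, fun t y => (Z t (y, gradient φ₀ y)).2, hY,
    fun y => by simp [hZ0], fun t _ y => ⟨hX t y, hΞ t y⟩, ?_, ?_⟩
  · intro X' Ξ' y hX0 hΞ0 hode t ht
    obtain ⟨K, hK⟩ := hLip (t + 1) (by linarith)
    have hz : ∀ s, 0 ≤ s → HasDerivAt (fun r => (X' r y, Ξ' r y))
        (Ξ' s y, -gradient (V s) (X' s y)) s :=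
      fun s hs => (hode s hs).1.prodMk (hode s hs).2
    have := ODE_solution_unique_of_mem_Icc_right
      (v := fun s (p : Ed d × Ed d) => (p.2, -gradient (V s) p.1)) (s := fun _ => univ) (K := K)
      (a := 0) (b := t) (f := fun r => (X' r y, Ξ' r y)) (g := fun r => Z r (y, gradient φ₀ y))
      (fun s hs => (hK s ⟨by linarith [hs.1], by linarith [hs.2]⟩).lipschitzOnWith)
      (fun s hs => (hz s hs.1).continuousAt.continuousWithinAt)
      (fun s hs => (hz s hs.1).hasDerivWithinAt) (fun _ _ => mem_univ _)
      (fun s _ => (hZd s _).continuousAt.continuousWithinAt)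
      (fun s _ => (hZd s _).hasDerivWithinAt) (fun _ _ => mem_univ _)
      (by simp [hX0, hΞ0, hZ0]) (right_mem_Icc.2 ht)
    exact Prod.ext_iff.1 this
  · obtain ⟨K, hK⟩ := hLip 1 one_pos
    obtain ⟨ε, hε, hdet⟩ := HamFlow.exists_half_le_det (Ed d)
    -- `y ↦ x(t,y) - y` has Lipschitz constant `B t`
    set B : ℝ := max 1 L * Real.exp K with hB
    have hB0 : 0 < B := by positivity
    have hdisp : ∀ t ∈ Icc (0 : ℝ) 1, ∀ y y' : Ed d,
        ‖(Z t (y, gradient φ₀ y)).1 - (Z t (y', gradient φ₀ y')).1 - (y - y')‖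
          ≤ B * t * ‖y - y'‖ := by
      intro t ht y y'
      have h0 := (LipschitzWith.id.prodMk hφ).dist_le_mul y y'
      have := HamFlow.displacement_le (f := fun t => gradient (V t)) hK
        (fun s => hX s y) (fun s => hΞ s y) (fun s => hX s y') (fun s => hΞ s y')
        (D := (max 1 L : NNReal) * dist y y') (by simpa [hZ0] using h0) ht
      rw [hZ0, hZ0, dist_eq_norm] at this
      refine this.trans_eq ?_
      rw [hB, NNReal.coe_max, NNReal.coe_one]
      ring
    set δ : ℝ := min (1 / 2) (ε / 2) with hδ
    have hδ0 : 0 < δ := by positivity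
    refine ⟨min 1 (δ / B), by positivity, 1 / 2, by norm_num, fun t ht => ?_⟩
    have ht1 : t ∈ Icc (0 : ℝ) 1 := ⟨ht.1, ht.2.trans (min_le_left _ _)⟩
    have hBt : B * t ≤ δ := by
      have := ht.2.trans (min_le_right _ _)
      rwa [le_div_iff₀ hB0, mul_comm] at this
    have hXt : ContDiff ℝ (⊤ : ℕ∞) (fun y => (Z t (y, gradient φ₀ y)).1) :=
      (hY.comp (contDiff_const.prodMk contDiff_id)).fst
    let δ' : NNReal := ⟨δ, hδ0.le⟩
    have hclose : ∀ y y' : Ed d,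
        ‖(Z t (y, gradient φ₀ y)).1 - (Z t (y', gradient φ₀ y')).1 - (y - y')‖
          ≤ δ' * ‖y - y'‖ := fun y y' =>
      (hdisp t ht1 y y').trans (mul_le_mul_of_nonneg_right hBt (norm_nonneg _))
    have hJ : ∀ y, 1 / 2 ≤ LinearMap.det ((fderiv ℝ (fun y => (Z t (y, gradient φ₀ y)).1) y :
        Ed d →L[ℝ] Ed d) : Ed d →ₗ[ℝ] Ed d) := fun y =>
      hdet _ ((HamFlow.norm_fderiv_sub_id_le (hXt.differentiable (by simp)) hclose y).trans_lt
        ((min_le_right _ _).trans_lt (half_lt_self hε)))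
    have hδ1 : δ' < 1 := by
      rw [← NNReal.coe_lt_coe]
      exact (min_le_left _ _).trans_lt (by norm_num)
    obtain ⟨hbij, hinv⟩ := HamFlow.exists_smooth_inverse hXt hδ1 hclose
      fun y => (lt_of_lt_of_le (by norm_num) (hJ y)).ne'
    exact ⟨hbij, hinv, hJ⟩
end
end
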